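/- arXiv:2105.05984 — 10 statements merged into one kernel-verified Lean document; each statement's English description precedes it below -/
import Mathlib

section
/- Let p be a prime, let m be an integer with 1 ≤ m ≤ p, let x, y ∈ {0, …, p−1} be distinct keys, and let a ∈ {0, …, m−1}. With h a random linear hash function with parameters p and m, it holds that | Pr( h(x) ≡ h(y) + a (mod m) ) − 1/m | ≤ 3/p; in particular this quantity is also at most 3/m. -/
theorem aux_zero (p : ℕ) (s t : ℕ) (hs : s < p) (ht : t < p)
    (h : (p : ℤ) ∣ (s : ℤ) - t) : s = t := by
  have := Int.eq_zero_of_abs_lt_dvd h (by rw [abs_lt]; constructor <;> omega)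
  omega

theorem aux_inj (p : ℕ) (hp : p.Prime) (x y : ℕ) (hx : x < p) (hy : y < p) (hxy : x ≠ y)
    (s t s' t' : ℕ) (hs : s < p) (ht : t < p) (hs' : s' < p) (ht' : t' < p)
    (h1 : (s * x + t) % p = (s' * x + t') % p)
    (h2 : (s * y + t) % p = (s' * y + t') % p) : s = s' ∧ t = t' := by
  have e1 : (p : ℤ) ∣ ((s' * x + t' : ℕ) : ℤ) - ((s * x + t : ℕ) : ℤ) :=
    (Nat.modEq_iff_dvd).1 h1
  have e2 : (p : ℤ) ∣ ((s' * y + t' : ℕ) : ℤ) - ((s * y + t : ℕ) : ℤ) :=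
    (Nat.modEq_iff_dvd).1 h2
  push_cast at e1 e2
  have e3 : (p : ℤ) ∣ ((s' : ℤ) - s) * ((x : ℤ) - y) := by
    obtain ⟨k, hk⟩ := e1
    obtain ⟨l, hl⟩ := e2
    exact ⟨k - l, by linear_combination hk - hl⟩
  have hss : s = s' := by
    rcases (Nat.prime_iff_prime_int.1 hp).dvd_or_dvd e3 with h | h
    · exact (aux_zero p s' s hs' hs h).symm
    · exact absurd (aux_zero p x y hx hy h) hxy
  subst hss
  refine ⟨rfl, (aux_zero p t' t ht' ht ?_).symm⟩
  convert e1 using 1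
  ring

theorem aux_count (p m : ℕ) (hm : 1 ≤ m) (v : ℕ) :
    |(((Finset.range p).filter fun u => u ≡ v [MOD m]).card : ℝ) - p / m| ≤ 1 := by
  have hm0 : (0 : ℝ) < m := by exact_mod_cast hm
  rw [← Nat.count_eq_card_filter_range, Nat.count_modEq_card p (by omega) v]
  have h1 : (m : ℝ) * ((p / m : ℕ) : ℝ) + ((p % m : ℕ) : ℝ) = p := by
    exact_mod_cast Nat.div_add_mod p m
  have h2 : ((p % m : ℕ) : ℝ) < m := by exact_mod_cast Nat.mod_lt p hm
  have h3 : (0 : ℝ) ≤ ((p % m : ℕ) : ℝ) := by positivity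
  have h4 : (p : ℝ) / m = ((p / m : ℕ) : ℝ) + ((p % m : ℕ) : ℝ) / m := by
    field_simp; linarith
  have h5 : ((p % m : ℕ) : ℝ) / m < 1 := by rw [div_lt_one hm0]; exact h2
  have h6 : 0 ≤ ((p % m : ℕ) : ℝ) / m := by positivity
  rw [h4, abs_le]
  split_ifs <;> push_cast <;> constructor <;> linarith

theorem aux_main (p m : ℕ) (hp : p.Prime) (hm : 1 ≤ m)
    (x y : ℕ) (hx : x < p) (hy : y < p) (hxy : x ≠ y) (a : ℕ) :
    ((Finset.range p ×ˢ Finset.range p).filter fun στ : ℕ × ℕ =>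
          ((στ.1 * x + στ.2) % p) % m ≡ ((στ.1 * y + στ.2) % p) % m + a [MOD m]).card
    = ∑ v ∈ Finset.range p, ((Finset.range p).filter fun u => u ≡ v + a [MOD m]).card := by
  have hp0 := hp.pos
  set S := Finset.range p ×ˢ Finset.range p with hS
  let f : ℕ × ℕ → ℕ × ℕ := fun q => ((q.1 * y + q.2) % p, (q.1 * x + q.2) % p)
  have hf : ∀ q ∈ S, f q ∈ S := by
    intro q _
    simp [hS, f, Nat.mod_lt _ hp0]
  have hinj : Set.InjOn f S := by
    rintro ⟨s, t⟩ h ⟨s', t'⟩ h' e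
    simp only [hS, Finset.coe_product, Set.mem_prod, Finset.mem_coe, Finset.mem_range] at h h'
    simp only [f, Prod.mk.injEq] at e
    obtain ⟨h1, h2⟩ := aux_inj p hp x y hx hy hxy s t s' t' h.1 h.2 h'.1 h'.2 e.2 e.1
    rw [h1, h2]
  have hsurj := Finset.surjOn_of_injOn_of_card_le f hf hinj le_rfl
  have key : (S.filter fun στ : ℕ × ℕ =>
          ((στ.1 * x + στ.2) % p) % m ≡ ((στ.1 * y + στ.2) % p) % m + a [MOD m]).card
      = (S.filter fun q : ℕ × ℕ => q.2 ≡ q.1 + a [MOD m]).card := by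
    have hiff : ∀ q : ℕ × ℕ, (((q.1 * x + q.2) % p) % m ≡ ((q.1 * y + q.2) % p) % m + a [MOD m])
        ↔ (f q).2 ≡ (f q).1 + a [MOD m] := by
      intro q
      simp [f, Nat.ModEq]
    apply Finset.card_bij (fun q _ => f q)
    · intro q hq
      rw [Finset.mem_filter] at hq ⊢
      exact ⟨hf q hq.1, (hiff q).1 hq.2⟩
    · intro q hq q' hq' e
      exact hinj (Finset.mem_filter.1 hq).1 (Finset.mem_filter.1 hq').1 e
    · intro b hb
      rw [Finset.mem_filter] at hb
      obtain ⟨q, hq, rfl⟩ := hsurj hb.1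
      exact ⟨q, Finset.mem_filter.2 ⟨hq, (hiff q).2 hb.2⟩, rfl⟩
  rw [key, Finset.card_filter, hS, Finset.sum_product]
  simp only [Finset.card_filter]


/-- Universality of linear hashing. For a prime `p`, `1 ≤ m ≤ p`,
distinct keys `x y ∈ [p]` and `a ∈ [m]`, with `h(x) = ((σx + τ) mod p) mod m` for
`σ, τ` uniform in `[p]`, we have `|Pr(h(x) ≡ h(y) + a (mod m)) − 1/m| ≤ 3/p ≤ 3/m`. -/
theorem stmt_2 (p m : ℕ) (hp : p.Prime) (hm : 1 ≤ m) (hmp : m ≤ p)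
    (x y : ℕ) (hx : x < p) (hy : y < p) (hxy : x ≠ y) (a : ℕ) (ha : a < m) :
    abs (((((Finset.range p ×ˢ Finset.range p).filter fun στ =>
          ((στ.1 * x + στ.2) % p) % m ≡ ((στ.1 * y + στ.2) % p) % m + a [MOD m]).card : ℝ)
        / (p : ℝ) ^ 2) - 1 / (m : ℝ)) ≤ 3 / (p : ℝ)
    ∧ abs (((((Finset.range p ×ˢ Finset.range p).filter fun στ =>
          ((στ.1 * x + στ.2) % p) % m ≡ ((στ.1 * y + στ.2) % p) % m + a [MOD m]).card : ℝ)
        / (p : ℝ) ^ 2) - 1 / (m : ℝ)) ≤ 3 / (m : ℝ) := by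
  have hp0 : (0 : ℝ) < p := by exact_mod_cast hp.pos
  have hm0 : (0 : ℝ) < m := by exact_mod_cast hm
  have hmp' : (m : ℝ) ≤ p := by exact_mod_cast hmp
  have h3 : 3 / (p : ℝ) ≤ 3 / m := by gcongr
  rw [aux_main p m hp hm x y hx hy hxy a]
  refine (fun h => ⟨h, h.trans h3⟩) ?_
  push_cast
  set c : ℕ → ℝ := fun v => (((Finset.range p).filter fun u => u ≡ v + a [MOD m]).card : ℝ) with hc
  have hb : |∑ v ∈ Finset.range p, (c v - p / m)| ≤ p := by
    refine (Finset.abs_sum_le_sum_abs _ _).trans ?_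
    refine (Finset.sum_le_sum fun v _ => aux_count p m hm (v + a)).trans ?_
    simp
  have he : (∑ v ∈ Finset.range p, c v) / (p : ℝ) ^ 2 - 1 / m
      = (∑ v ∈ Finset.range p, (c v - p / m)) / (p : ℝ) ^ 2 := by
    rw [Finset.sum_sub_distrib]
    simp only [Finset.sum_const, Finset.card_range, nsmul_eq_mul]
    field_simp
  rw [he, abs_div, abs_of_pos (by positivity : (0 : ℝ) < (p : ℝ) ^ 2), div_le_div_iff₀ (by positivity) hp0]
  nlinarith [sq_nonneg (p : ℝ)]
end

section
/- Let p be a prime, let m be an integer with 1 ≤ m ≤ p, and let σ, τ ∈ {0, …, p−1} be arbitrary, defining h(x) = ((σx + τ) mod p) mod m. Then for all nonnegative integers x, y there exists an offset o ∈ {−p, 0, p} such that h(x) + h(y) ≡ h(0) + h(x + y) + o (mod m). -/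
/-- Almost-affinity of linear hashing. For a prime `p`, `1 ≤ m ≤ p`
and any fixed `σ, τ ∈ [p]` defining `h(x) = ((σx + τ) mod p) mod m`, for all `x, y ∈ ℕ`
there is an offset `o ∈ {−p, 0, p}` with `h(x) + h(y) ≡ h(0) + h(x+y) + o (mod m)`. -/
theorem stmt_4 (p m : ℕ) (hp : p.Prime) (hm : 1 ≤ m) (hmp : m ≤ p)
    (σ τ : ℕ) (hσ : σ < p) (hτ : τ < p) (x y : ℕ) :
    ∃ o ∈ ({-(p : ℤ), 0, (p : ℤ)} : Finset ℤ),
      ((((σ * x + τ) % p) % m : ℕ) : ℤ) + ((((σ * y + τ) % p) % m : ℕ) : ℤ)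
        ≡ ((((σ * 0 + τ) % p) % m : ℕ) : ℤ) + ((((σ * (x + y) + τ) % p) % m : ℕ) : ℤ) + o
          [ZMOD (m : ℤ)] := by
  have hp0 : 0 < p := hp.pos
  have ha := Nat.mod_lt (σ * x + τ) hp0
  have hb := Nat.mod_lt (σ * y + τ) hp0
  have hc := Nat.mod_lt (σ * 0 + τ) hp0
  have hd := Nat.mod_lt (σ * (x + y) + τ) hp0
  have ea := Nat.mod_add_div (σ * x + τ) p
  have eb := Nat.mod_add_div (σ * y + τ) p
  have ec := Nat.mod_add_div (σ * 0 + τ) p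
  have ed := Nat.mod_add_div (σ * (x + y) + τ) p
  generalize (σ * x + τ) % p = a at *
  generalize (σ * y + τ) % p = b at *
  generalize (σ * 0 + τ) % p = c at *
  generalize (σ * (x + y) + τ) % p = d at *
  generalize (σ * x + τ) / p = qa at *
  generalize (σ * y + τ) / p = qb at *
  generalize (σ * 0 + τ) / p = qc at *
  generalize (σ * (x + y) + τ) / p = qd at *
  zify at ha hb hc hd ea eb ec ed hp0
  obtain ⟨k, hk⟩ : ∃ k : ℤ, (a : ℤ) + b - c - d = p * k :=
    ⟨qc + qd - qa - qb, by linear_combination ea + eb - ec - ed⟩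
  have hk1 : k < 2 := by
    by_contra! h
    nlinarith
  have hk2 : -2 < k := by
    by_contra! h
    nlinarith
  refine ⟨p * k, ?_, ?_⟩
  · have : k = -1 ∨ k = 0 ∨ k = 1 := by omega
    rcases this with rfl | rfl | rfl <;> simp
  · have e : (a : ℤ) + b = c + d + p * k := by linarith
    push_cast
    have h (z : ℤ) : z % m ≡ z [ZMOD m] := Int.mod_modEq z m
    calc (a : ℤ) % m + b % m ≡ a + b [ZMOD m] := (h a).add (h b)
      _ = c + d + p * k := e
      _ ≡ c % m + d % m + p * k [ZMOD m] := (((h c).add (h d)).add_right _).symm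
end

section
/- There is a constant m₀ such that the following holds for all integers m ≥ m₀ and U ≥ 2: for any two distinct x, y ∈ {0, …, U−1}, if p is chosen uniformly at random among all primes in the interval [m, 2m], then Pr( x ≡ y (mod p) ) ≤ 2 log₂(U) / m. (In particular, for m ≥ m₀ the interval [m, 2m] contains at least one prime.) -/
theorem aux_centralBinom_le (n : ℕ) (n_large : 2 < n) :
    n.centralBinom ≤ (2 * n) ^ (Nat.sqrt (2 * n)) * 4 ^ (2 * n / 3) *
      (2 * n) ^ ((Finset.Icc n (2 * n)).filter Nat.Prime).card := by
  have n_pos : 0 < n := by omega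
  have n2_pos : 1 ≤ 2 * n := by omega
  let S := {p ∈ Finset.range (2 * n / 3 + 1) | Nat.Prime p}
  let T := (Finset.Icc n (2 * n)).filter Nat.Prime
  let f : ℕ → ℕ := fun x => x ^ n.centralBinom.factorization x
  have hf : ∀ p, f p ≤ 2 * n := fun p => Nat.pow_factorization_choose_le (by omega)
  have hdisj : Disjoint S T := by
    rw [Finset.disjoint_left]
    intro p hp hq
    simp only [S, T, Finset.mem_filter, Finset.mem_range, Finset.mem_Icc] at hp hq
    omega
  have hST : n.centralBinom = (∏ x ∈ S, f x) * ∏ x ∈ T, f x := by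
    rw [← Finset.prod_union hdisj]
    refine (Eq.trans ?_ n.prod_pow_factorization_centralBinom).symm
    apply Finset.prod_subset
    · intro p hp
      simp only [S, T, Finset.mem_union, Finset.mem_filter, Finset.mem_range, Finset.mem_Icc] at hp ⊢
      omega
    · intro p hp hnp
      simp only [S, T, Finset.mem_union, Finset.mem_filter, Finset.mem_range, Finset.mem_Icc] at hp hnp
      by_cases hpp : p.Prime
      · simp only [hpp, and_true] at hnp
        show p ^ _ = 1
        rw [Nat.factorization_centralBinom_of_two_mul_self_lt_three_mul n_large
          (by omega) (by omega), pow_zero]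
      · show p ^ _ = 1
        rw [Nat.factorization_eq_zero_of_not_prime n.centralBinom hpp, pow_zero]
  rw [hST, ← Finset.prod_filter_mul_prod_filter_not S (· ≤ Nat.sqrt (2 * n))]
  apply mul_le_mul'
  · apply mul_le_mul'
    · refine (Finset.prod_le_prod' fun p _ => hf p).trans ?_
      have : (Finset.Icc 1 (Nat.sqrt (2 * n))).card = Nat.sqrt (2 * n) := by
        rw [Nat.card_Icc, Nat.add_sub_cancel]
      rw [Finset.prod_const]
      refine pow_right_mono₀ n2_pos ((Finset.card_le_card fun x hx => ?_).trans this.le)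
      obtain ⟨h1, h2⟩ := Finset.mem_filter.1 hx
      exact Finset.mem_Icc.mpr ⟨(Finset.mem_filter.1 h1).2.one_lt.le, h2⟩
    · refine le_trans ?_ (primorial_le_four_pow (2 * n / 3))
      refine (Finset.prod_le_prod' fun p hp => (?_ : f p ≤ p)).trans ?_
      · obtain ⟨h1, h2⟩ := Finset.mem_filter.1 hp
        refine (pow_right_mono₀ (Finset.mem_filter.1 h1).2.one_lt.le ?_).trans (pow_one p).le
        exact Nat.factorization_choose_le_one (Nat.sqrt_lt'.mp <| not_le.1 h2)
      refine Finset.prod_le_prod_of_subset_of_one_le' (Finset.filter_subset _ _) ?_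
      exact fun p hp _ => (Finset.mem_filter.1 hp).2.one_lt.le
  · refine (Finset.prod_le_prod' fun p _ => hf p).trans ?_
    rw [Finset.prod_const]

theorem aux_log (n : ℕ) (hn : 4 ≤ n) :
    (n : ℝ) * (2 / 3) * Real.log 2 ≤ (1 + √(2 * n)) * Real.log (2 * n) +
      ((Finset.Icc n (2 * n)).filter Nat.Prime).card * Real.log (2 * n) := by
  set N := ((Finset.Icc n (2 * n)).filter Nat.Prime).card with hN
  have h1 := Nat.four_pow_lt_mul_centralBinom n hn
  have h2 := aux_centralBinom_le n (by omega)
  rw [← hN] at h2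
  have h3 : 4 ^ n ≤ n * ((2 * n) ^ (Nat.sqrt (2 * n)) * 4 ^ (2 * n / 3) * (2 * n) ^ N) :=
    h1.le.trans (Nat.mul_le_mul_left _ h2)
  have h4 : (4 : ℝ) ^ n ≤ n * ((2 * n) ^ (Nat.sqrt (2 * n)) * 4 ^ (2 * n / 3) * (2 * n) ^ N) := by
    exact_mod_cast h3
  have hnpos : (0 : ℝ) < n := by exact_mod_cast (by omega : 0 < n)
  have h5 := Real.log_le_log (by positivity) h4
  rw [Real.log_mul (by positivity) (by positivity), Real.log_mul (by positivity) (by positivity),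
    Real.log_mul (by positivity) (by positivity), Real.log_pow, Real.log_pow, Real.log_pow,
    Real.log_pow] at h5
  have h6 : Real.log 4 = 2 * Real.log 2 := by
    rw [show (4 : ℝ) = 2 ^ 2 by norm_num, Real.log_pow]; norm_num
  have hl2 : 0 < Real.log 2 := Real.log_pos (by norm_num)
  have hn4 : (4 : ℝ) ≤ n := by exact_mod_cast hn
  have hl : 0 ≤ Real.log (2 * n) := Real.log_nonneg (by linarith)
  have h7 : Real.log n ≤ Real.log (2 * n) := Real.log_le_log hnpos (by linarith)
  have h8 : ((Nat.sqrt (2 * n) : ℕ) : ℝ) ≤ √(2 * n) := by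
    have := Real.nat_sqrt_le_real_sqrt (a := 2 * n)
    exact_mod_cast this
  have h9 : ((2 * n / 3 : ℕ) : ℝ) ≤ 2 * n / 3 := by
    have := Nat.cast_div_le (α := ℝ) (m := 2 * n) (n := 3)
    exact_mod_cast this
  rw [h6] at h5
  have h10 := mul_le_mul_of_nonneg_right h8 hl
  have h11 := mul_le_mul_of_nonneg_right h9 hl2.le
  nlinarith

theorem aux_event : ∃ m₀ : ℕ, ∀ m : ℕ, m₀ ≤ m → 4 ≤ m ∧ 6 ≤ Real.log m ∧
    (1 + √(2 * m)) * Real.log (2 * m) ≤ (m : ℝ) / 24 := by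
  have h1 : ∀ᶠ m : ℕ in Filter.atTop, (6 : ℝ) ≤ Real.log m :=
    (Real.tendsto_log_atTop.comp tendsto_natCast_atTop_atTop).eventually_ge_atTop 6
  have h2 := (isLittleO_log_rpow_atTop (r := 1 / 2) (by norm_num)).bound
    (show (0 : ℝ) < 1 / 96 by norm_num)
  have h3 : Filter.Tendsto (fun m : ℕ => (2 : ℝ) * m) Filter.atTop Filter.atTop :=
    tendsto_natCast_atTop_atTop.const_mul_atTop (by norm_num)
  have h4 := h3.eventually h2
  obtain ⟨m₀, h⟩ := Filter.eventually_atTop.1 ((Filter.eventually_ge_atTop 4).and (h1.and h4))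
  refine ⟨m₀, fun m hm => ?_⟩
  obtain ⟨a, b, c⟩ := h m hm
  refine ⟨a, b, ?_⟩
  have hm4 : (4 : ℝ) ≤ m := by exact_mod_cast a
  rw [← Real.sqrt_eq_rpow, Real.norm_of_nonneg (Real.sqrt_nonneg _)] at c
  have c' := (le_abs_self _).trans c
  have hs : √(2 * (m : ℝ)) ^ 2 = 2 * m := Real.sq_sqrt (by linarith)
  have hs1 : 1 ≤ √(2 * (m : ℝ)) := Real.one_le_sqrt.2 (by linarith)
  calc _ ≤ (2 * √(2 * (m : ℝ))) * (1 / 96 * √(2 * (m : ℝ))) := by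
        apply mul_le_mul (by linarith) c' (Real.log_nonneg (by linarith)) (by positivity)
    _ = m / 24 := by linear_combination (1 / 48) * hs

theorem aux_count_s6 : ∃ m₀ : ℕ, ∀ m : ℕ, m₀ ≤ m → 4 ≤ m ∧ (m : ℝ) * Real.log 2 ≤
    2 * ((Finset.Icc m (2 * m)).filter Nat.Prime).card * Real.log m := by
  obtain ⟨m₀, h⟩ := aux_event
  refine ⟨m₀, fun m hm => ?_⟩
  obtain ⟨a, b, c⟩ := h m hm
  refine ⟨a, ?_⟩
  have hl := aux_log m a
  have hm4 : (4 : ℝ) ≤ m := by exact_mod_cast a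
  have hN : (0 : ℝ) ≤ ((Finset.Icc m (2 * m)).filter Nat.Prime).card := Nat.cast_nonneg _
  generalize (((Finset.Icc m (2 * m)).filter Nat.Prime).card : ℝ) = N at *
  have hll : Real.log (2 * m) = Real.log 2 + Real.log m :=
    Real.log_mul (by norm_num) (by linarith)
  by_contra! hc
  have h2 := Real.log_two_gt_d9
  have hNb : 12 * N ≤ m * Real.log 2 := by nlinarith
  have e : N * Real.log (2 * m) = N * Real.log 2 + N * Real.log m := by rw [hll]; ring
  rw [e] at hl
  have h2' := Real.log_two_lt_d9
  have : N * Real.log 2 ≤ N * 0.7 := by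
    apply mul_le_mul_of_nonneg_left _ hN; linarith
  have : (m : ℝ) * 0.69 ≤ m * Real.log 2 := by
    apply mul_le_mul_of_nonneg_left _ (by linarith); linarith
  nlinarith

theorem aux_bad (m U x y : ℕ) (hx : x < U) (hy : y < U) (hxy : x ≠ y) :
    m ^ ((Finset.Icc m (2 * m)).filter fun p => p.Prime ∧ x % p = y % p).card ≤ U := by
  wlog h : x < y generalizing x y
  · have := this y x hy hx hxy.symm (by omega)
    simpa only [eq_comm] using this
  have hd : ∏ p ∈ (Finset.Icc m (2 * m)).filter (fun p => p.Prime ∧ x % p = y % p), p ∣ y - x := by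
    apply Finset.prod_primes_dvd
    · intro p hp
      exact (Finset.mem_filter.1 hp).2.1.prime
    · intro p hp
      exact (Nat.modEq_iff_dvd' h.le).1 (Finset.mem_filter.1 hp).2.2
  have h1 := Nat.le_of_dvd (by omega) hd
  have h2 := Finset.pow_card_le_prod
    ((Finset.Icc m (2 * m)).filter (fun p => p.Prime ∧ x % p = y % p)) (fun p => p) m
    (fun p hp => (Finset.mem_Icc.1 (Finset.mem_filter.1 hp).1).1)
  omega

/-- Hashing modulo a random prime is universal. There is `m₀` such that
for all `m ≥ m₀`, `U ≥ 2` and distinct `x, y ∈ [U]`: the interval `[m, 2m]` contains a prime,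
and for `p` uniform among the primes in `[m, 2m]`, `Pr(x ≡ y (mod p)) ≤ 2 log₂(U) / m`. -/
theorem stmt_6 : ∃ m₀ : ℕ, ∀ m : ℕ, m₀ ≤ m → ∀ U : ℕ, 2 ≤ U →
    ∀ x y : ℕ, x < U → y < U → x ≠ y →
      ((Finset.Icc m (2 * m)).filter Nat.Prime).Nonempty ∧
      ((((Finset.Icc m (2 * m)).filter fun p => p.Prime ∧ x % p = y % p).card : ℝ)
          / (((Finset.Icc m (2 * m)).filter Nat.Prime).card : ℝ)
        ≤ 2 * Real.logb 2 U / m) := by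
  obtain ⟨m₀, h⟩ := aux_count_s6
  refine ⟨m₀, fun m hm U hU x y hx hy hxy => ?_⟩
  obtain ⟨hm4, hc⟩ := h m hm
  have hm4' : (4 : ℝ) ≤ m := by exact_mod_cast hm4
  have hne : ((Finset.Icc m (2 * m)).filter Nat.Prime).Nonempty := by
    obtain ⟨p, hp, h1, h2⟩ := Nat.exists_prime_lt_and_le_two_mul m (by omega)
    exact ⟨p, Finset.mem_filter.2 ⟨Finset.mem_Icc.2 ⟨h1.le, h2⟩, hp⟩⟩
  refine ⟨hne, ?_⟩
  have hN : (0 : ℝ) < ((Finset.Icc m (2 * m)).filter Nat.Prime).card := by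
    exact_mod_cast hne.card_pos
  have hb := aux_bad m U x y hx hy hxy
  generalize ((Finset.Icc m (2 * m)).filter fun p => p.Prime ∧ x % p = y % p).card = k at *
  generalize (((Finset.Icc m (2 * m)).filter Nat.Prime).card : ℝ) = N at *
  have hb' : (m : ℝ) ^ k ≤ U := by exact_mod_cast hb
  have hb2 := Real.log_le_log (by positivity) hb'
  rw [Real.log_pow] at hb2
  have hl2 : 0 < Real.log 2 := Real.log_pos (by norm_num)
  rw [Real.logb, mul_div_assoc', div_div, div_le_div_iff₀ hN (by positivity)]
  have hk : (0 : ℝ) ≤ k := Nat.cast_nonneg _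
  have e1 := mul_le_mul_of_nonneg_left hc hk
  have e2 := mul_le_mul_of_nonneg_left hb2 hN.le
  nlinarith
end

section
/- Let p be a prime and let x, y be nonzero integers with |x|, |y| < √(p/2). Then H(x/y) = H_p(x̄ · ȳ^{−1}), where x̄, ȳ denote the residues of x, y modulo p (which are nonzero in ℤ_p). -/
/-- The height of a nonzero rational `q = a/b` in lowest terms is `max |a| |b|`. -/
def ratHeight (q : ℚ) : ℕ := max q.num.natAbs q.den

/-- The height of a residue `x ∈ ℤ_p`: the least `max |a| |b|` over integers `a, b` with
`p ∤ b` and `x = a · b⁻¹` in `ℤ_p`. -/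
noncomputable def modularHeight (p : ℕ) (x : ZMod p) : ℕ :=
  sInf { n : ℕ | ∃ a b : ℤ, ¬ ((p : ℤ) ∣ b) ∧ x = (a : ZMod p) * ((b : ZMod p))⁻¹ ∧
    n = max a.natAbs b.natAbs }

lemma aux_height (x y : ℤ) (hx : x ≠ 0) (hy : y ≠ 0) :
    ratHeight ((x : ℚ) / (y : ℚ)) ≤ max x.natAbs y.natAbs := by
  unfold ratHeight
  have h1 : ((x : ℚ) / (y : ℚ)).num ∣ x := by
    have := Rat.num_dvd x hy
    rwa [Rat.divInt_eq_div] at this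
  have h2 : (((x : ℚ) / (y : ℚ)).den : ℤ) ∣ y := by
    have := Rat.den_dvd x y
    rwa [Rat.divInt_eq_div] at this
  have h3 := Nat.le_of_dvd (Int.natAbs_pos.2 hx) (Int.natAbs_dvd_natAbs.2 h1)
  have h4 := Nat.le_of_dvd (Int.natAbs_pos.2 hy) (Int.natAbs_dvd_natAbs.2 h2)
  simp only [Int.natAbs_natCast] at h4
  exact max_le_max h3 h4

lemma aux_bd (p : ℕ) (x : ℤ)
    (hx' : (|x| : ℝ) < Real.sqrt ((p : ℝ) / 2)) : 2 * |x| ^ 2 < p := by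
  have h := (Real.lt_sqrt (abs_nonneg _)).1 hx'
  have h2 : 2 * |(x : ℝ)| ^ 2 < p := by linarith
  exact_mod_cast h2

theorem stmt_7 (p : ℕ) (hp : p.Prime) (x y : ℤ) (hx : x ≠ 0) (hy : y ≠ 0)
    (hx' : (|x| : ℝ) < Real.sqrt ((p : ℝ) / 2)) (hy' : (|y| : ℝ) < Real.sqrt ((p : ℝ) / 2)) :
    ratHeight ((x : ℚ) / (y : ℚ)) = modularHeight p ((x : ZMod p) * ((y : ZMod p))⁻¹) := by
  have : Fact p.Prime := ⟨hp⟩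
  have bx := aux_bd p x hx'
  have b_y := aux_bd p y hy'
  have hyp : ¬ ((p : ℤ) ∣ y) := by
    intro h
    have h1 := Int.le_of_dvd (abs_pos.2 hy) ((dvd_abs _ _).2 h)
    have := abs_pos.2 hy
    nlinarith
  have hy0 : (y : ZMod p) ≠ 0 := fun h => hyp ((ZMod.intCast_zmod_eq_zero_iff_dvd y p).1 h)
  have hdy : (((x : ℚ) / (y : ℚ)).den : ℤ) ∣ y := by
    have := Rat.den_dvd x y
    rwa [Rat.divInt_eq_div] at this
  have hyQ : (y : ℚ) ≠ 0 := by exact_mod_cast hy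
  unfold modularHeight
  apply le_antisymm
  · apply le_csInf
    · exact ⟨_, x, y, hyp, rfl, rfl⟩
    rintro n ⟨a, b, hb, hab, rfl⟩
    by_contra! hlt
    have hlt2 := lt_of_lt_of_le hlt (aux_height x y hx hy)
    have hb0 : (b : ZMod p) ≠ 0 := fun h => hb ((ZMod.intCast_zmod_eq_zero_iff_dvd b p).1 h)
    have hbz : b ≠ 0 := by rintro rfl; simp at hb
    have hc : ((x * b - a * y : ℤ) : ZMod p) = 0 := by
      push_cast
      field_simp at hab
      rw [hab]; ring
    have hd := (ZMod.intCast_zmod_eq_zero_iff_dvd _ p).1 hc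
    have hM : ∃ M : ℤ, 0 ≤ M ∧ 2 * M ^ 2 < p ∧ |x| ≤ M ∧ |y| ≤ M ∧ |a| ≤ M ∧ |b| ≤ M := by
      refine ⟨max |x| |y|, le_max_of_le_left (abs_nonneg _), ?_, le_max_left _ _, le_max_right _ _,
        ?_, ?_⟩
      · rcases max_choice |x| |y| with h | h <;> rw [h] <;> assumption
      all_goals
        simp only [Int.abs_eq_natAbs]
        omega
    obtain ⟨M, hM0, hMp, hxM, hyM, haM, hbM⟩ := hM
    have hz : x * b - a * y = 0 := by
      apply Int.eq_zero_of_abs_lt_dvd hd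
      have e1 : |x * b| ≤ M * M := by rw [abs_mul]; gcongr
      have e2 : |a * y| ≤ M * M := by rw [abs_mul]; gcongr
      have := abs_sub (x * b) (a * y)
      nlinarith
    have haz : a ≠ 0 := by
      rintro rfl
      have : x * b = 0 := by linarith
      rcases mul_eq_zero.1 this with h | h <;> contradiction
    have hbQ : (b : ℚ) ≠ 0 := by exact_mod_cast hbz
    have hq : (x : ℚ) / y = a / b := by
      rw [div_eq_div_iff hyQ hbQ]
      exact_mod_cast (sub_eq_zero.1 hz)
    rw [hq] at hlt
    exact absurd (aux_height a b haz hbz) (not_le.2 hlt)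
  · apply Nat.sInf_le
    have hdp : ¬ ((p : ℤ) ∣ (((x : ℚ) / (y : ℚ)).den : ℤ)) := fun h => hyp (h.trans hdy)
    refine ⟨((x : ℚ) / (y : ℚ)).num, ((x : ℚ) / (y : ℚ)).den, hdp, ?_, by simp [ratHeight]⟩
    have hd0 : ((((x : ℚ) / (y : ℚ)).den : ℤ) : ZMod p) ≠ 0 :=
      fun h => hdp ((ZMod.intCast_zmod_eq_zero_iff_dvd _ p).1 h)
    rw [← div_eq_mul_inv, ← div_eq_mul_inv, div_eq_div_iff hy0 hd0]
    have key : x * (((x : ℚ) / (y : ℚ)).den : ℤ) = ((x : ℚ) / (y : ℚ)).num * y := by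
      have h1 := Rat.num_div_den ((x : ℚ) / (y : ℚ))
      have h2 : ((((x : ℚ) / (y : ℚ)).den : ℕ) : ℚ) ≠ 0 := by
        exact_mod_cast ((x : ℚ) / (y : ℚ)).den_nz
      have h3 := (div_eq_div_iff h2 hyQ).1 h1
      have h4 : ((((x : ℚ) / (y : ℚ)).num * y : ℤ) : ℚ) =
        ((x * (((x : ℚ) / (y : ℚ)).den : ℤ) : ℤ) : ℚ) := by
        push_cast; exact h3
      exact (Int.cast_injective h4).symm
    exact_mod_cast congrArg (Int.cast : ℤ → ZMod p) key
end

section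
/- Let p be a prime and let x̄ ∈ ℤ_p be a nonzero residue. Then H_p(x̄) < √p. -/
/-- For a prime `p` and a nonzero residue `x̄ ∈ ℤ_p`, `H_p(x̄) < √p`. -/
theorem stmt_8 (p : ℕ) (hp : p.Prime) (x : ZMod p) (hx : x ≠ 0) :
    (modularHeight p x : ℝ) < Real.sqrt p := by
  haveI : Fact p.Prime := ⟨hp⟩
  set k := Nat.sqrt p with hk
  have h1 : p < (k + 1) * (k + 1) := Nat.lt_succ_sqrt p
  have h2 : k * k ≤ p := Nat.sqrt_le p
  have h3 : k * k ≠ p := by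
    intro h
    exact (Nat.prime_mul_iff.not.mpr (by
      rintro (⟨h, h'⟩ | ⟨h, h'⟩) <;> rw [h'] at h <;> exact Nat.not_prime_one h)) (h ▸ hp)
  have h4 : k < p := Nat.sqrt_lt_self hp.one_lt
  obtain ⟨u, v, huv, he⟩ := Fintype.exists_ne_map_eq_of_card_lt
    (fun u : Fin (k+1) × Fin (k+1) => ((u.1 : ℕ) : ZMod p) - x * ((u.2 : ℕ) : ZMod p))
    (by simpa [ZMod.card] using h1)
  obtain ⟨⟨a1, ha1⟩, ⟨b1, hb1⟩⟩ := u
  obtain ⟨⟨a2, ha2⟩, ⟨b2, hb2⟩⟩ := v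
  simp only at he
  have small : ∀ c : ℤ, c.natAbs ≤ k → (p : ℤ) ∣ c → c = 0 := by
    intro c hc hd
    exact Int.eq_zero_of_dvd_of_natAbs_lt_natAbs hd (by simp; omega)
  have hax : (((a1 : ℤ) - a2 : ℤ) : ZMod p) = x * (((b1 : ℤ) - b2 : ℤ) : ZMod p) := by
    push_cast
    linear_combination he
  have hb : ¬ ((p : ℤ) ∣ ((b1 : ℤ) - b2)) := by
    intro hd
    have hb0 := small _ (by omega) hd
    rw [hb0, Int.cast_zero, mul_zero, ZMod.intCast_zmod_eq_zero_iff_dvd] at hax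
    have ha0 := small _ (by omega) hax
    apply huv
    simp only [Prod.mk.injEq, Fin.mk.injEq]
    omega
  have hb' : (((b1 : ℤ) - b2 : ℤ) : ZMod p) ≠ 0 := by
    rwa [Ne, ZMod.intCast_zmod_eq_zero_iff_dvd]
  have hle : modularHeight p x ≤ max ((a1 : ℤ) - a2).natAbs ((b1 : ℤ) - b2).natAbs :=
    Nat.sInf_le ⟨_, _, hb, by rw [hax, mul_assoc, mul_inv_cancel₀ hb', mul_one], rfl⟩
  have hle' : modularHeight p x ≤ k := hle.trans (by omega)
  apply Real.lt_sqrt_of_sq_lt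
  have : modularHeight p x ^ 2 < p := by
    have := Nat.mul_le_mul hle' hle'
    rw [sq]; omega
  exact_mod_cast this
end

section
/- There is a universal constant C such that the following holds: for every integer U ≥ 2 and every set X of nonzero integers with X ⊆ {−U, …, U}, we have Σ_{x ∈ X} Σ_{y ∈ X} 1/H(x/y) ≤ C · U · log₂(U). -/
lemma aux_decomp (x y : ℤ) (hy : y ≠ 0) :
    ∃ c : ℤ, c ≠ 0 ∧ x = c * ((x : ℚ) / (y : ℚ)).num ∧ y = c * (((x : ℚ) / (y : ℚ)).den : ℤ) := by
  obtain ⟨c, h1, h2⟩ := Rat.exists_eq_mul_div_num_and_eq_mul_div_den x hy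
  refine ⟨c, ?_, h1, h2⟩
  rintro rfl
  simp at h2
  exact hy h2

def auxG (p : ℤ × ℤ) : ℕ := p.2.natAbs / ((p.1 : ℚ) / (p.2 : ℚ)).den

noncomputable def auxA (h : ℕ) : Finset (ℤ × ℤ) :=
  (({(h : ℤ), -(h : ℤ)} : Finset ℤ) ×ˢ Finset.Icc (-(h : ℤ)) h) ∪
  (Finset.Icc (-(h : ℤ)) h ×ˢ ({(h : ℤ), -(h : ℤ)} : Finset ℤ))

lemma auxA_card (h : ℕ) (hh : 1 ≤ h) : (auxA h).card ≤ 12 * h := by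
  unfold auxA
  refine (Finset.card_union_le _ _).trans ?_
  rw [Finset.card_product, Finset.card_product, Int.card_Icc]
  have h2 : ({(h : ℤ), -(h : ℤ)} : Finset ℤ).card ≤ 2 := Finset.card_le_two
  have h3 : ((h : ℤ) + 1 - -(h : ℤ)).toNat = 2 * h + 1 := by omega
  rw [h3]
  nlinarith

lemma aux_spec (x y : ℤ) (hy : y ≠ 0) :
    1 ≤ auxG (x, y) ∧ 1 ≤ ratHeight ((x : ℚ) / (y : ℚ)) ∧
    max x.natAbs y.natAbs = auxG (x, y) * ratHeight ((x : ℚ) / (y : ℚ)) ∧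
    (x, y) ∈ (auxA (ratHeight ((x : ℚ) / (y : ℚ)))).image
      (fun p => ((auxG (x, y) : ℤ) * p.1, (auxG (x, y) : ℤ) * p.2)) := by
  obtain ⟨c, hc, h1, h2⟩ := aux_decomp x y hy
  have hG : auxG (x, y) = c.natAbs := by
    unfold auxG
    have : y.natAbs = c.natAbs * ((x : ℚ) / (y : ℚ)).den := by
      conv_lhs => rw [h2]
      simp [Int.natAbs_mul]
    simp only []
    rw [this]
    exact Nat.mul_div_cancel _ (Rat.den_pos _)
  rw [hG]
  have hd := Rat.den_pos ((x : ℚ) / (y : ℚ))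
  unfold ratHeight
  generalize ((x : ℚ) / (y : ℚ)).den = d at *
  generalize ((x : ℚ) / (y : ℚ)).num = n at *
  subst h1 h2
  refine ⟨by omega, by omega, ?_, ?_⟩
  · simp [Int.natAbs_mul, Nat.mul_max_mul_left]
  · rw [Finset.mem_image]
    rcases Int.natAbs_eq c with h | h
    · refine ⟨(n, d), ?_, by rw [← h]⟩
      simp only [auxA, Finset.mem_union, Finset.mem_product, Finset.mem_insert,
        Finset.mem_singleton, Finset.mem_Icc]
      omega
    · refine ⟨(-n, -d), ?_, ?_⟩
      · simp only [auxA, Finset.mem_union, Finset.mem_product, Finset.mem_insert,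
          Finset.mem_singleton, Finset.mem_Icc]
        omega
      · have h' : (c.natAbs : ℤ) = -c := by omega
        rw [h']; simp

/-- Sum of inverse heights. There is a universal constant `C` such that
for every `U ≥ 2` and every set `X ⊆ {−U, …, U}` of nonzero integers,
`∑_{x ∈ X} ∑_{y ∈ X} 1/H(x/y) ≤ C · U · log₂ U`. -/
theorem stmt_9 : ∃ C : ℝ, ∀ U : ℕ, 2 ≤ U → ∀ X : Finset ℤ,
    (∀ x ∈ X, x ≠ 0) → X ⊆ Finset.Icc (-(U : ℤ)) (U : ℤ) →
    ∑ x ∈ X, ∑ y ∈ X, (1 : ℝ) / (ratHeight ((x : ℚ) / (y : ℚ)) : ℝ)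
      ≤ C * U * Real.logb 2 U := by
  refine ⟨24, fun U hU X hX0 hXU => ?_⟩
  rw [← Finset.sum_product']
  let t : Finset (Σ _ : ℕ, ℕ) := (Finset.Icc 1 U).sigma (fun g => Finset.Icc 1 (U / g))
  let φ : ℤ × ℤ → (Σ _ : ℕ, ℕ) := fun p => ⟨auxG p, ratHeight ((p.1 : ℚ) / (p.2 : ℚ))⟩
  have hmaps : ∀ p ∈ X ×ˢ X, φ p ∈ t := by
    rintro ⟨x, y⟩ hp
    rw [Finset.mem_product] at hp
    obtain ⟨h1, h2, h3, -⟩ := aux_spec x y (hX0 y hp.2)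
    have hx := Finset.mem_Icc.1 (hXU hp.1)
    have hy := Finset.mem_Icc.1 (hXU hp.2)
    have hle : auxG (x, y) * ratHeight ((x : ℚ) / (y : ℚ)) ≤ U := by
      rw [← h3]; simp only [] at hx hy; omega
    simp only [t, φ, Finset.mem_sigma, Finset.mem_Icc]
    refine ⟨⟨h1, by nlinarith⟩, h2, ?_⟩
    rw [Nat.le_div_iff_mul_le (by omega)]
    rwa [mul_comm]
  rw [← Finset.sum_fiberwise_of_maps_to hmaps]
  have hU0 : (0 : ℝ) < U := by positivity
  have step : ∀ q ∈ t, ∑ p ∈ X ×ˢ X with φ p = q,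
      (1 : ℝ) / (ratHeight ((p.1 : ℚ) / (p.2 : ℚ)) : ℝ) ≤ 12 := by
    rintro ⟨g, h⟩ hq
    simp only [t, Finset.mem_sigma, Finset.mem_Icc] at hq
    have hh : (0 : ℝ) < h := by exact_mod_cast hq.2.1
    have hcard : ((X ×ˢ X).filter (fun p => φ p = ⟨g, h⟩)).card ≤ 12 * h := by
      refine le_trans (Finset.card_le_card (t := (auxA h).image
        (fun p => ((g : ℤ) * p.1, (g : ℤ) * p.2))) ?_)
        (Finset.card_image_le.trans (auxA_card h hq.2.1))
      rintro ⟨x, y⟩ hp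
      rw [Finset.mem_filter, Finset.mem_product] at hp
      obtain ⟨-, -, -, h4⟩ := aux_spec x y (hX0 y hp.1.2)
      have := hp.2
      simp only [φ, Sigma.mk.injEq, heq_eq_eq] at this
      rwa [this.1, this.2] at h4
    calc _ = ∑ p ∈ X ×ˢ X with φ p = ⟨g, h⟩, (1 : ℝ) / h := by
          refine Finset.sum_congr rfl fun p hp => ?_
          have := (Finset.mem_filter.1 hp).2
          simp only [φ, Sigma.mk.injEq, heq_eq_eq] at this
          rw [this.2]
      _ ≤ 12 := by
          rw [Finset.sum_const, nsmul_eq_mul, mul_one_div, div_le_iff₀ hh]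
          exact_mod_cast hcard
  have hcardt : (t.card : ℝ) ≤ U * (1 + Real.log U) := by
    have h1 : (t.card : ℝ) ≤ U * ((harmonic U : ℚ) : ℝ) := by
      rw [Finset.card_sigma, harmonic_eq_sum_Icc]
      push_cast
      rw [Finset.mul_sum]
      refine Finset.sum_le_sum fun g _ => ?_
      rw [Nat.card_Icc, Nat.add_sub_cancel, ← div_eq_mul_inv]
      exact Nat.cast_div_le
    exact h1.trans (mul_le_mul_of_nonneg_left (harmonic_le_one_add_log U) hU0.le)
  have hlog2 : (0 : ℝ) < Real.log 2 := Real.log_pos (by norm_num)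
  have hlog2' : Real.log 2 ≤ 1 := by linarith [Real.log_two_lt_d9]
  have hl : Real.log 2 ≤ Real.log U := Real.log_le_log (by norm_num) (by exact_mod_cast hU)
  have hb1 : 1 ≤ Real.logb 2 U := by
    unfold Real.logb; rwa [le_div_iff₀ hlog2, one_mul]
  have hb2 : Real.log U ≤ Real.logb 2 U := by
    unfold Real.logb; rw [le_div_iff₀ hlog2]; nlinarith
  refine (Finset.sum_le_sum step).trans ?_
  rw [Finset.sum_const, nsmul_eq_mul]
  have : (U : ℝ) * (1 + Real.log U) ≤ U * (2 * Real.logb 2 U) :=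
    mul_le_mul_of_nonneg_left (by linarith) hU0.le
  linarith
end

section
/- Let p be a prime and let x, y be nonzero coprime integers with |x|, |y| < √p. Let X̄ ⊆ ℤ_p be an interval of size |x|, i.e., X̄ = { ā + ī : i ∈ {0, …, |x|−1} } for some ā ∈ ℤ_p. Then disc( ȳ · x̄^{−1} · X̄ ) ≤ 2, i.e., for every interval Ī ⊆ ℤ_p it holds that | #( ȳ x̄^{−1} X̄ ∩ Ī ) − |x| · |Ī| / p | ≤ 2. -/
lemma core_count (p x y A B r : ℤ) (hx : 0 < x) (hy : 0 < y) (hco : IsCoprime x y)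
    (hxy : x * y < p) (hr : 0 ≤ r) (T : Finset ℤ)
    (hT : ∀ n, n ∈ T ↔ (B ≤ n ∧ n < B + r) ∧ ∃ i k : ℤ, 0 ≤ i ∧ i < x ∧ x * n = A + y * i + p * k) :
    p * (T.card : ℤ) ≤ x * r + 2 * p ∧ x * r ≤ p * (T.card : ℤ) + 2 * p := by
  have hp : 0 < p := lt_trans (by positivity) hxy
  have hyi : ∀ i, i < x → y * i < p := fun i hi => by nlinarith
  set K0 := (x * B - A) / p with hK0
  set K1 := (x * (B + r) - A) / p with hK1
  have e0 := Int.mul_ediv_add_emod (x * B - A) p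
  have e1 := Int.mul_ediv_add_emod (x * (B + r) - A) p
  have l0 := Int.emod_nonneg (x * B - A) hp.ne'
  have l1 := Int.emod_nonneg (x * (B + r) - A) hp.ne'
  have u0 := Int.emod_lt_of_pos (x * B - A) hp
  have u1 := Int.emod_lt_of_pos (x * (B + r) - A) hp
  rw [← hK0] at e0
  rw [← hK1] at e1
  have hK : K0 ≤ K1 := Int.ediv_le_ediv hp (by nlinarith)
  constructor
  · have hc : T.card ≤ (Finset.Icc K0 K1).card := by
      apply Finset.card_le_card_of_injOn (fun n => (x * n - A) / p)
      · intro n hn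
        have hn := (hT n).1 hn
        obtain ⟨⟨h1, h2⟩, -⟩ := hn
        simp only [Finset.coe_Icc, Set.mem_Icc]
        exact ⟨Int.ediv_le_ediv hp (by nlinarith), Int.ediv_le_ediv hp (by nlinarith)⟩
      · intro n hn m hm hnm
        obtain ⟨-, i, k, hi0, hix, hi⟩ := (hT n).1 hn
        obtain ⟨-, j, l, hj0, hjx, hj⟩ := (hT m).1 hm
        have q1 : (x * n - A) / p = k := by
          rw [show x * n - A = y * i + p * k by linarith, Int.add_mul_ediv_left _ _ hp.ne',
            Int.ediv_eq_zero_of_lt (by positivity) (hyi i hix), zero_add]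
        have q2 : (x * m - A) / p = l := by
          rw [show x * m - A = y * j + p * l by linarith, Int.add_mul_ediv_left _ _ hp.ne',
            Int.ediv_eq_zero_of_lt (by positivity) (hyi j hjx), zero_add]
        have hkl : k = l := by rw [← q1, ← q2]; exact hnm
        subst hkl
        have hd : x ∣ y * (i - j) := ⟨n - m, by linarith⟩
        have hd' := hco.dvd_of_dvd_mul_left hd
        have : i - j = 0 := Int.eq_zero_of_abs_lt_dvd hd' (by rw [abs_lt]; constructor <;> linarith)
        have hij : i = j := by linarith
        subst hij
        exact mul_left_cancel₀ hx.ne' (hi.trans hj.symm)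
    rw [Int.card_Icc] at hc
    have hc' : (T.card : ℤ) ≤ K1 + 1 - K0 := by omega
    nlinarith
  · have hc : (Finset.Ico (K0 + 1) K1).card ≤ T.card := by
      have ex : ∀ k : ℤ, ∃ n i : ℤ, 0 ≤ i ∧ i < x ∧ x * n = A + y * i + p * k := by
        intro k
        obtain ⟨u, v, huv⟩ := hco
        have h1 := Int.mul_ediv_add_emod (-(A + p * k) * v) x
        refine ⟨(A + p * k) * u - y * ((-(A + p * k) * v) / x), (-(A + p * k) * v) % x, Int.emod_nonneg _ hx.ne', Int.emod_lt_of_pos _ hx, ?_⟩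
        linear_combination (A + p * k) * huv - y * h1
      choose f g hg0 hgx hfg using ex
      apply Finset.card_le_card_of_injOn f
      · intro k hk
        simp only [Finset.coe_Ico, Set.mem_Ico] at hk
        refine (hT _).2 ⟨⟨?_, ?_⟩, g k, k, hg0 k, hgx k, hfg k⟩
        · have := hfg k
          have := hg0 k
          have : x * B < x * f k := by nlinarith
          exact (lt_of_mul_lt_mul_left this hx.le).le
        · have := hfg k
          have := hyi _ (hgx k)
          have : x * f k < x * (B + r) := by nlinarith
          exact lt_of_mul_lt_mul_left this hx.le
      · intro k hk l hl hkl
        have h1 := hfg k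
        have h2 := hfg l
        rw [hkl] at h1
        have := hyi _ (hgx k)
        have := hyi _ (hgx l)
        have := mul_nonneg hy.le (hg0 k)
        have := mul_nonneg hy.le (hg0 l)
        rcases lt_trichotomy k l with hlt | heq | hlt
        · nlinarith
        · exact heq
        · nlinarith
    rw [Int.card_Ico] at hc
    have hc' : K1 - (K0 + 1) ≤ (T.card : ℤ) := by omega
    nlinarith

lemma mid_count (p : ℕ) [Fact p.Prime] (x y : ℤ) (hx : 0 < x) (hy : 0 < y) (hco : IsCoprime x y)
    (hxy : x * y < p) (a b : ZMod p) (r : ℕ) (hr : r ≤ p) (W : Finset (ZMod p))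
    (hW : ∀ z, z ∈ W ↔ (∃ i : ℤ, 0 ≤ i ∧ i < x ∧ (x : ZMod p) * z = y * (a + i)) ∧
      ∃ j : ℤ, 0 ≤ j ∧ j < r ∧ z = b + j) :
    (p : ℤ) * (W.card : ℤ) ≤ x * r + 2 * p ∧ x * r ≤ p * (W.card : ℤ) + 2 * p := by
  classical
  obtain ⟨A, rfl⟩ := ZMod.intCast_surjective a
  obtain ⟨B, rfl⟩ := ZMod.intCast_surjective b
  set T : Finset ℤ := (Finset.Ico B (B + r)).filter
    (fun n => ∃ i k : ℤ, 0 ≤ i ∧ i < x ∧ x * n = y * A + y * i + p * k) with hTdef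
  have key : ∀ n i : ℤ, ((x : ZMod p) * n = y * (A + i)) ↔ ∃ k : ℤ, x * n = y * A + y * i + p * k := by
    intro n i
    have := ZMod.intCast_eq_intCast_iff_dvd_sub (y * (A + i)) (x * n) p
    push_cast at this
    rw [eq_comm, this]
    constructor
    · rintro ⟨k, hk⟩
      exact ⟨k, by linarith⟩
    · rintro ⟨k, hk⟩
      exact ⟨k, by linarith⟩
  have hcard : W = T.image (fun n : ℤ => (n : ZMod p)) := by
    ext z
    rw [hW]
    simp only [hTdef, Finset.mem_image, Finset.mem_filter, Finset.mem_Ico]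
    constructor
    · rintro ⟨⟨i, h0, h1, h⟩, j, hj0, hj1, rfl⟩
      refine ⟨B + j, ⟨⟨by linarith, by linarith⟩, ?_⟩, by push_cast; rfl⟩
      obtain ⟨k, hk⟩ := (key (B + j) i).1 (by push_cast; exact h)
      exact ⟨i, k, h0, h1, hk⟩
    · rintro ⟨n, ⟨⟨h1, h2⟩, i, k, hi0, hi1, hk⟩, rfl⟩
      exact ⟨⟨i, hi0, hi1, (key n i).2 ⟨k, hk⟩⟩, n - B, by linarith, by linarith, by push_cast; ring⟩
  have hinj : W.card = T.card := by
    rw [hcard]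
    apply Finset.card_image_of_injOn
    intro n hn m hm hnm
    simp only [hTdef, Finset.coe_filter, Finset.mem_Ico, Set.mem_setOf_eq] at hn hm
    have hd := (ZMod.intCast_eq_intCast_iff_dvd_sub n m p).1 hnm
    have : m - n = 0 := Int.eq_zero_of_abs_lt_dvd hd (by rw [abs_lt]; constructor <;> omega)
    linarith
  rw [hinj]
  refine core_count p x y (y * A) B r hx hy hco hxy (by positivity) T ?_
  intro n
  simp only [hTdef, Finset.mem_filter, Finset.mem_Ico]

lemma pos_count (p : ℕ) [Fact p.Prime] (x y : ℤ) (hx : 0 < x) (hy : y ≠ 0) (hco : IsCoprime x y)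
    (hxy : x * |y| < p) (a b : ZMod p) (r : ℕ) (hr : r ≤ p) (W : Finset (ZMod p))
    (hW : ∀ z, z ∈ W ↔ (∃ i : ℤ, 0 ≤ i ∧ i < x ∧ (x : ZMod p) * z = y * (a + i)) ∧
      ∃ j : ℤ, 0 ≤ j ∧ j < r ∧ z = b + j) :
    (p : ℤ) * (W.card : ℤ) ≤ x * r + 2 * p ∧ x * r ≤ p * (W.card : ℤ) + 2 * p := by
  rcases lt_or_gt_of_ne hy with h | h
  · rw [abs_of_neg h] at hxy
    refine mid_count p x (-y) hx (by linarith) hco.neg_right hxy (-(a + x - 1)) b r hr W ?_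
    intro z
    rw [hW]
    refine and_congr_left fun _ => ?_
    constructor
    · rintro ⟨i, h0, h1, h⟩
      exact ⟨x - 1 - i, by linarith, by linarith, by rw [h]; push_cast; ring⟩
    · rintro ⟨i, h0, h1, h⟩
      exact ⟨x - 1 - i, by linarith, by linarith, by rw [h]; push_cast; ring⟩
  · rw [abs_of_pos h] at hxy
    exact mid_count p x y hx h hco hxy a b r hr W hW


/-- Discrepancy of dilated intervals. Let `p` be a prime and let `x, y`
be nonzero coprime integers with `|x|, |y| < √p`. Let `X̄ ⊆ ℤ_p` be an interval of size
`|x|`, i.e. `X̄ = {ā + ī : i < |x|}`. Then `disc(ȳ x̄⁻¹ X̄) ≤ 2`: for every interval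
`Ī = {b̄ + ī : i < r}` (`r ≤ p`), `| #(ȳ x̄⁻¹ X̄ ∩ Ī) − |x| · r / p | ≤ 2`. -/
theorem stmt_10 (p : ℕ) (hp : p.Prime) (x y : ℤ) (hx : x ≠ 0) (hy : y ≠ 0)
    (hco : IsCoprime x y)
    (hxp : (|x| : ℝ) < Real.sqrt p) (hyp : (|y| : ℝ) < Real.sqrt p)
    (a : ZMod p) (b : ZMod p) (r : ℕ) (hr : r ≤ p) :
    abs ((((((Finset.range x.natAbs).image fun i : ℕ => a + (i : ZMod p)).image
            fun s => (y : ZMod p) * ((x : ZMod p))⁻¹ * s) ∩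
          ((Finset.range r).image fun i : ℕ => b + (i : ZMod p))).card : ℝ)
        - (x.natAbs : ℝ) * r / p) ≤ 2 := by
  haveI : Fact p.Prime := ⟨hp⟩
  have hpR : (0 : ℝ) < p := by exact_mod_cast hp.pos
  have hsq : |(x : ℝ)| * |(y : ℝ)| < p := by
    calc |(x : ℝ)| * |(y : ℝ)| < Real.sqrt p * Real.sqrt p :=
          mul_lt_mul'' hxp hyp (abs_nonneg _) (abs_nonneg _)
      _ = p := Real.mul_self_sqrt hpR.le
  have hxy : |x| * |y| < (p : ℤ) := by exact_mod_cast hsq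
  have hx1 : 1 ≤ |x| := Int.one_le_abs hx
  have hy1 : 1 ≤ |y| := Int.one_le_abs hy
  have hxlt : |x| < (p : ℤ) := by nlinarith
  have hx0 : (x : ZMod p) ≠ 0 := by
    intro h
    exact hx (Int.eq_zero_of_abs_lt_dvd ((ZMod.intCast_zmod_eq_zero_iff_dvd x p).1 h) hxlt)
  set W := ((((Finset.range x.natAbs).image fun i : ℕ => a + (i : ZMod p)).image
            fun s => (y : ZMod p) * ((x : ZMod p))⁻¹ * s) ∩
          ((Finset.range r).image fun i : ℕ => b + (i : ZMod p))) with hWdef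
  have hW : ∀ z, z ∈ W ↔ (∃ i : ℤ, 0 ≤ i ∧ i < |x| ∧ (x : ZMod p) * z = y * (a + i)) ∧
      ∃ j : ℤ, 0 ≤ j ∧ j < r ∧ z = b + j := by
    intro z
    simp only [hWdef, Finset.mem_inter, Finset.mem_image, Finset.mem_range,
      exists_exists_and_eq_and]
    refine and_congr ?_ ?_
    · constructor
      · rintro ⟨i, hi, rfl⟩
        refine ⟨i, by positivity, by rw [Int.abs_eq_natAbs]; omega, ?_⟩
        push_cast
        field_simp
      · rintro ⟨i, h0, h1, h⟩
        lift i to ℕ using h0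
        rw [Int.abs_eq_natAbs] at h1
        refine ⟨i, by omega, ?_⟩
        push_cast at h
        rw [mul_right_comm, ← h]
        field_simp
    · constructor
      · rintro ⟨i, hi, rfl⟩
        exact ⟨i, by positivity, by omega, by push_cast; rfl⟩
      · rintro ⟨i, h0, h1, rfl⟩
        lift i to ℕ using h0
        exact ⟨i, by omega, by push_cast; rfl⟩
  have main : (p : ℤ) * (W.card : ℤ) ≤ |x| * r + 2 * p ∧ |x| * r ≤ p * (W.card : ℤ) + 2 * p := by
    rcases lt_or_gt_of_ne hx with h | h
    · rw [abs_of_neg h] at hxy hW ⊢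
      refine pos_count p (-x) (-y) (by linarith) (neg_ne_zero.2 hy) hco.neg_neg
        (by rwa [abs_neg]) a b r hr W ?_
      intro z
      rw [hW]
      push_cast
      simp only [neg_mul, neg_inj]
    · rw [abs_of_pos h] at hxy hW ⊢
      exact pos_count p x y h hy hco hxy a b r hr W hW
  obtain ⟨m1, m2⟩ := main
  rw [Int.abs_eq_natAbs] at m1 m2
  have m1' : (p : ℝ) * W.card ≤ x.natAbs * r + 2 * p := by exact_mod_cast m1
  have m2' : (x.natAbs : ℝ) * r ≤ p * W.card + 2 * p := by exact_mod_cast m2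
  rw [abs_le]
  constructor
  · have : (x.natAbs : ℝ) * r / p ≤ W.card + 2 := by
      rw [div_le_iff₀ hpR]; linarith
    linarith
  · have : (W.card : ℝ) - 2 ≤ (x.natAbs : ℝ) * r / p := by
      rw [le_div_iff₀ hpR]; linarith
    linarith
end

section
/- Let p be a prime and let x be an integer with 1 ≤ x < p. Then, in ℤ_p, { ī · x̄^{−1} : i ∈ {0, …, x−1} } = { residue of ⌈ j·p / x ⌉ modulo p : j ∈ {0, …, x−1} }, where x̄ denotes the residue of x modulo p. -/
/-- For a prime `p` and an integer `1 ≤ x < p`, in `ℤ_p` it holds that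
`{ ī · x̄⁻¹ : i ∈ [x] } = { ⌈ j·p / x ⌉ mod p : j ∈ [x] }`. -/
theorem stmt_11 (p : ℕ) (hp : p.Prime) (x : ℕ) (hx1 : 1 ≤ x) (hxp : x < p) :
    ((Finset.range x).image fun i : ℕ => (i : ZMod p) * ((x : ZMod p))⁻¹)
      = (Finset.range x).image fun j : ℕ =>
          ((⌈((j : ℚ) * (p : ℚ)) / (x : ℚ)⌉ : ℤ) : ZMod p) := by
  have : Fact p.Prime := ⟨hp⟩
  have hx0 : (x : ZMod p) ≠ 0 := by
    rw [Ne, ZMod.natCast_eq_zero_iff]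
    exact fun h => absurd (Nat.le_of_dvd hx1 h) (by omega)
  have hxq : (0 : ℚ) < x := by exact_mod_cast hx1
  have key : ∀ (i j : ℕ) (c : ℤ), (x : ℤ) * c = j * p + i →
      (i : ZMod p) * ((x : ZMod p))⁻¹ = (c : ZMod p) := by
    intro i j c h
    have h2 := congrArg (Int.cast : ℤ → ZMod p) h
    push_cast at h2
    rw [ZMod.natCast_self, mul_zero, zero_add] at h2
    rw [← h2]
    field_simp
  ext y
  simp only [Finset.mem_image, Finset.mem_range]
  constructor
  · rintro ⟨i, hi, rfl⟩
    have hc : IsCoprime (x : ℤ) (p : ℤ) := by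
      rw [Nat.isCoprime_iff_coprime]
      exact (Nat.coprime_of_lt_prime (by omega) hxp hp).symm
    obtain ⟨a, b, hab⟩ := hc
    have hxz : (0 : ℤ) < x := by exact_mod_cast hx1
    have hj0 := Int.emod_nonneg (-(i : ℤ) * b) hxz.ne'
    have hj1 := Int.emod_lt_of_pos (-(i : ℤ) * b) hxz
    have hj2 := Int.emod_add_mul_ediv (-(i : ℤ) * b) x
    obtain ⟨j, hj⟩ := Int.eq_ofNat_of_zero_le hj0
    rw [hj] at hj1 hj2
    set q := (-(i : ℤ) * b) / x
    have hcc : (x : ℤ) * (i * a - q * p) = j * p + i := by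
      linear_combination (i : ℤ) * hab - (p : ℤ) * hj2
    refine ⟨j, by exact_mod_cast hj1, ?_⟩
    rw [key i j _ hcc]
    congr 1
    have hq : (x : ℚ) * ((i * a - q * p : ℤ) : ℚ) = j * p + i := by exact_mod_cast hcc
    have hi' : (i : ℚ) < x := by exact_mod_cast hi
    have hi0 : (0 : ℚ) ≤ i := by positivity
    rw [Int.ceil_eq_iff]
    constructor
    · rw [lt_div_iff₀ hxq]; linarith
    · rw [div_le_iff₀ hxq]; linarith
  · rintro ⟨j, hj, rfl⟩
    have h1 := Int.le_ceil ((j : ℚ) * p / x)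
    have h2 := Int.ceil_lt_add_one ((j : ℚ) * p / x)
    set c := ⌈(j : ℚ) * p / x⌉
    rw [div_le_iff₀ hxq] at h1
    rw [← sub_lt_iff_lt_add, lt_div_iff₀ hxq] at h2
    have h1' : (j : ℤ) * p ≤ c * x := by exact_mod_cast h1
    have h2' : (c - 1) * x < (j : ℤ) * p := by exact_mod_cast h2
    obtain ⟨i, hi⟩ := Int.eq_ofNat_of_zero_le (sub_nonneg.2 h1')
    refine ⟨i, ?_, key i j c (by linarith)⟩
    have : (i : ℤ) < x := by linarith
    exact_mod_cast this
end

section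
/- Let p be a prime, let x̄, ȳ ∈ ℤ_p be nonzero, and let Ī ⊆ ℤ_p be an arithmetic progression Ī = { ā + ī · b̄ : i ∈ {0, …, r−1} } with b̄ ≠ 0 and 1 ≤ r ≤ p (so |Ī| = r). Then #{ σ̄ ∈ ℤ_p : σ̄ x̄ ∈ Ī and σ̄ ȳ ∈ Ī } ≤ |Ī|²/p + 3·|Ī| / H_p(x̄ ȳ^{−1}) + 2. Equivalently, for σ̄ uniform on ℤ_p, Pr( (σ̄ x̄, σ̄ ȳ) ∈ Ī² ) ≤ |Ī|²/p² + 3|Ī| / (p · H_p(x̄ ȳ^{−1})) + 2/p. -/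
lemma aux_card (T : Finset ℤ) (p : ℤ) (hp : 0 < p) (W : ℤ) (hW : 0 ≤ W)
    (hc : ∀ s ∈ T, ∀ t ∈ T, p ∣ s - t) (hd : ∀ s ∈ T, ∀ t ∈ T, s - t ≤ W) :
    p * (T.card : ℤ) ≤ W + p := by
  rcases T.eq_empty_or_nonempty with h | h
  · subst h; simp; omega
  · set m := T.min' h
    have hm : m ∈ T := T.min'_mem h
    have hle : ∀ t ∈ T, m ≤ t := fun t ht => T.min'_le t ht
    have h1 : T ⊆ (Finset.Icc 0 (W / p)).image (fun q => m + p * q) := by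
      intro t ht
      obtain ⟨q, hq⟩ := hc t ht m hm
      have h2 := hd t ht m hm
      have h3 := hle t ht
      refine Finset.mem_image.2 ⟨q, Finset.mem_Icc.2 ⟨?_, ?_⟩, by linarith⟩
      · by_contra hn
        push Not at hn
        nlinarith
      · rw [Int.le_ediv_iff_mul_le hp]; linarith
    have h2 := (Finset.card_le_card h1).trans Finset.card_image_le
    have h3 : 0 ≤ W / p := Int.ediv_nonneg hW hp.le
    rw [Int.card_Icc] at h2
    have h4 : (T.card : ℤ) ≤ W / p + 1 := by omega
    have h5 := Int.mul_ediv_self_le (x := W) (k := p) hp.ne'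
    nlinarith

lemma aux_height_s12 (p : ℕ) [Fact p.Prime] (l : ZMod p) :
    ∃ α β : ℤ, ¬ ((p : ℤ) ∣ β) ∧ (α : ZMod p) = l * β ∧
      modularHeight p l = max α.natAbs β.natAbs ∧
      modularHeight p l * modularHeight p l ≤ p ∧
      ∀ d e : ℤ, ¬ ((p : ℤ) ∣ e) → (d : ZMod p) = l * e →
        modularHeight p l ≤ max d.natAbs e.natAbs := by
  have hp : p.Prime := Fact.out
  have key : ∀ d e : ℤ, ¬ ((p : ℤ) ∣ e) → (d : ZMod p) = l * e → max d.natAbs e.natAbs ∈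
      { n : ℕ | ∃ a b : ℤ, ¬ ((p : ℤ) ∣ b) ∧ l = (a : ZMod p) * ((b : ZMod p))⁻¹ ∧
    n = max a.natAbs b.natAbs } := by
    intro d e he hde
    refine ⟨d, e, he, ?_, rfl⟩
    have : (e : ZMod p) ≠ 0 := by rwa [Ne, ZMod.intCast_zmod_eq_zero_iff_dvd]
    rw [hde]; field_simp
  have hmin : ∀ d e : ℤ, ¬ ((p : ℤ) ∣ e) → (d : ZMod p) = l * e →
        modularHeight p l ≤ max d.natAbs e.natAbs := fun d e he hde => Nat.sInf_le (key d e he hde)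
  have hthue : ∃ d e : ℤ, ¬ ((p : ℤ) ∣ e) ∧ (d : ZMod p) = l * e ∧
      max d.natAbs e.natAbs ≤ Nat.sqrt p := by
    set s := Nat.sqrt p with hs
    have hsp : s < p := Nat.sqrt_lt_self hp.one_lt
    have hcard : (Finset.univ : Finset (ZMod p)).card <
        ((Finset.range (s+1)) ×ˢ (Finset.range (s+1))).card := by
      rw [Finset.card_univ, ZMod.card, Finset.card_product, Finset.card_range]
      exact Nat.lt_succ_sqrt p
    obtain ⟨P, hP, Q, hQ, hne, heq⟩ := Finset.exists_ne_map_eq_of_card_lt_of_maps_to hcard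
      (f := fun P : ℕ × ℕ => (P.1 : ZMod p) - l * (P.2 : ZMod p))
      (fun _ _ => Finset.mem_coe.2 (Finset.mem_univ _))
    simp only [Finset.mem_product, Finset.mem_range] at hP hQ
    have hE : ((((P.1 : ℤ) - Q.1 : ℤ)) : ZMod p) = l * (((P.2 : ℤ) - Q.2 : ℤ) : ZMod p) := by
      push_cast; linear_combination heq
    refine ⟨(P.1 : ℤ) - Q.1, (P.2 : ℤ) - Q.2, ?_, hE, ?_⟩
    · intro hdv
      rw [(ZMod.intCast_zmod_eq_zero_iff_dvd _ p).2 hdv, mul_zero,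
        ZMod.intCast_zmod_eq_zero_iff_dvd] at hE
      have h1 := Int.eq_zero_of_abs_lt_dvd hdv (by rw [abs_lt]; omega)
      have h2 := Int.eq_zero_of_abs_lt_dvd hE (by rw [abs_lt]; omega)
      exact hne (Prod.ext (by omega) (by omega))
    · omega
  obtain ⟨d, e, he, hde, hle⟩ := hthue
  have hmem := Nat.sInf_mem ⟨_, key d e he hde⟩
  obtain ⟨α, β, hβ, hl, hH⟩ := hmem
  refine ⟨α, β, hβ, ?_, hH, ?_, hmin⟩
  · have : (β : ZMod p) ≠ 0 := by rwa [Ne, ZMod.intCast_zmod_eq_zero_iff_dvd]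
    rw [hl]; field_simp
  · have := (hmin d e he hde).trans hle
    exact (Nat.mul_le_mul this this).trans (Nat.sqrt_le p)

/-- points of the shifted lattice in the box -/
noncomputable def auxS (p : ℕ) (l c : ZMod p) (R : ℤ) : Finset (ℤ × ℤ) :=
  ((Finset.Icc 0 R) ×ˢ (Finset.Icc 0 R)).filter (fun P => (P.1 : ZMod p) - l * (P.2 : ZMod p) = c)

lemma mem_auxS {p : ℕ} {l c : ZMod p} {R : ℤ} {i j : ℤ} :
    (i, j) ∈ auxS p l c R ↔ ((0 ≤ i ∧ i ≤ R) ∧ (0 ≤ j ∧ j ≤ R)) ∧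
      (i : ZMod p) - l * (j : ZMod p) = c := by
  simp [auxS]

lemma aux_par (p : ℕ) [Fact p.Prime] (l : ZMod p) (α β : ℤ) (H : ℕ) (hH : H = max α.natAbs β.natAbs)
    (hHp : H < p) (hα0 : α ≠ 0) (hβ0 : β ≠ 0) (hαβ : (α : ZMod p) = l * β)
    (hmin : ∀ d e : ℤ, ¬ ((p : ℤ) ∣ e) → (d : ZMod p) = l * e → H ≤ max d.natAbs e.natAbs)
    (d e : ℤ) (hde : (d : ZMod p) = l * e) (hpar : α * e = β * d) :
    ∃ m : ℤ, d = m * α ∧ e = m * β := by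
  have h1 := Int.emod_add_mul_ediv e β
  have h2 := Int.emod_nonneg e hβ0
  have h3 := Int.emod_lt_abs e hβ0
  set m := e / β
  set e' := e % β
  set d' := d - m * α with hd'
  have h4 : α * e' = β * d' := by rw [hd']; linear_combination hpar + α * h1
  have h5 : (d' : ZMod p) = l * e' := by
    have : e' = e - β * m := by linarith
    rw [this, hd']; push_cast; rw [hde, hαβ]; ring
  have h6 : |d'| < |α| := by
    have h7 : |α| * |e'| = |β| * |d'| := by rw [← abs_mul, ← abs_mul, h4]
    rw [abs_of_nonneg h2] at h7
    have := abs_pos.2 hα0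
    have := abs_pos.2 hβ0
    nlinarith
  rw [Int.abs_eq_natAbs] at h3
  rw [Int.abs_eq_natAbs, Int.abs_eq_natAbs] at h6
  have h8 : e' = 0 := by
    by_contra hne
    have hnd : ¬ ((p : ℤ) ∣ e') := by
      intro hdv
      exact hne (Int.eq_zero_of_abs_lt_dvd hdv (by rw [abs_of_nonneg h2]; omega))
    have := hmin d' e' hnd h5
    omega
  have h9 : d' = 0 := by
    rw [h8, mul_zero] at h4
    rcases mul_eq_zero.1 h4.symm with h | h
    · exact absurd h hβ0
    · exact h
  exact ⟨m, by linarith, by linarith⟩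

lemma aux_between (u w m R : ℤ) (hm : 1 ≤ m) (h0 : 0 ≤ u) (h1 : u ≤ R) (h2 : 0 ≤ u + m * w)
    (h3 : u + m * w ≤ R) : 0 ≤ u + (m - 1) * w ∧ u + (m-1) * w ≤ R := by
  rcases le_total 0 w with h | h <;> constructor <;> nlinarith

lemma aux_width (α β i j i' j' k R : ℤ) (hk : 0 ≤ k)
    (a1 : 0 ≤ i) (a2 : i ≤ R) (a3 : 0 ≤ i + k * α) (a4 : i + k * α ≤ R)
    (b1 : 0 ≤ j) (b2 : j ≤ R) (b3 : 0 ≤ j + k * β) (b4 : j + k * β ≤ R)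
    (a1' : 0 ≤ i') (a2' : i' ≤ R) (a3' : 0 ≤ i' + k * α) (a4' : i' + k * α ≤ R)
    (b1' : 0 ≤ j') (b2' : j' ≤ R) (b3' : 0 ≤ j' + k * β) (b4' : j' + k * β ≤ R) :
    (α * j - β * i) - (α * j' - β * i') ≤ |α| * (R - k * |β|) + |β| * (R - k * |α|) := by
  have h1 : |j - j'| ≤ R - k * |β| := by
    rcases abs_cases β with ⟨h, _⟩ | ⟨h, _⟩ <;> rw [h, abs_le] <;> constructor <;> linarith
  have h2 : |i' - i| ≤ R - k * |α| := by
    rcases abs_cases α with ⟨h, _⟩ | ⟨h, _⟩ <;> rw [h, abs_le] <;> constructor <;> linarith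
  have h3 : α * (j - j') ≤ |α| * |j - j'| := by rw [← abs_mul]; exact le_abs_self _
  have h4 : β * (i' - i) ≤ |β| * |i' - i| := by rw [← abs_mul]; exact le_abs_self _
  have h5 := mul_le_mul_of_nonneg_left h1 (abs_nonneg α)
  have h6 := mul_le_mul_of_nonneg_left h2 (abs_nonneg β)
  linarith

noncomputable def auxD (p : ℕ) (l c : ZMod p) (R α β : ℤ) (k : ℕ) : Finset (ℤ × ℤ) :=
  (auxS p l c R).filter (fun P => (P.1 + k * α, P.2 + k * β) ∈ auxS p l c R ∧
    (P.1 - α, P.2 - β) ∉ auxS p l c R)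

lemma aux_D (p : ℕ) [Fact p.Prime] (l c : ZMod p) (α β : ℤ) (H : ℕ) (hH : H = max α.natAbs β.natAbs)
    (hHp : H < p) (hα0 : α ≠ 0) (hβ0 : β ≠ 0) (hαβ : (α : ZMod p) = l * β)
    (hmin : ∀ d e : ℤ, ¬ ((p : ℤ) ∣ e) → (d : ZMod p) = l * e → H ≤ max d.natAbs e.natAbs)
    (R : ℤ) (k : ℕ) (hk : k * (H : ℤ) ≤ R) :
    (p : ℤ) * ((auxD p l c R α β k).card : ℤ) ≤
      |α| * (R - k * |β|) + |β| * (R - k * |α|) + p := by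
  have hp : p.Prime := Fact.out
  have hno : ∀ i j i' j' m : ℤ, 1 ≤ m → (i, j) ∈ auxD p l c R α β k →
      (i', j') ∈ auxD p l c R α β k → i' - i = m * α → j' - j = m * β → False := by
    intro i j i' j' m hm hP hQ hi hj
    simp only [auxD, Finset.mem_filter] at hP hQ
    apply hQ.2.2
    have e1 : i' = i + m * α := by linarith
    have e2 : j' = j + m * β := by linarith
    have hP1 := hP.1
    have hQ1 := hQ.1
    rw [mem_auxS] at hP1 hQ1 ⊢
    subst e1 e2
    have f1 := aux_between i α m R hm hP1.1.1.1 hP1.1.1.2 hQ1.1.1.1 hQ1.1.1.2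
    have f2 := aux_between j β m R hm hP1.1.2.1 hP1.1.2.2 hQ1.1.2.1 hQ1.1.2.2
    refine ⟨⟨⟨by linarith, by linarith⟩, ⟨by linarith, by linarith⟩⟩, ?_⟩
    rw [← hP1.2]; push_cast; rw [hαβ]; ring
  have hinj : Set.InjOn (fun P : ℤ × ℤ => α * P.2 - β * P.1) (auxD p l c R α β k) := by
    rintro ⟨i, j⟩ hP ⟨i', j'⟩ hQ heq
    rw [Finset.mem_coe] at hP hQ
    simp only at heq
    have hP1 := (Finset.mem_filter.1 hP).1
    have hQ1 := (Finset.mem_filter.1 hQ).1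
    rw [mem_auxS] at hP1 hQ1
    obtain ⟨m, h1, h2⟩ := aux_par p l α β H hH hHp hα0 hβ0 hαβ hmin (i' - i) (j' - j)
      (by push_cast; linear_combination hQ1.2 - hP1.2) (by linarith)
    rcases lt_trichotomy m 0 with h | h | h
    · exact (hno i' j' i j (-m) (by omega) hQ hP (by linarith) (by linarith)).elim
    · subst h
      exact Prod.ext (by simp; linarith) (by simp; linarith)
    · exact (hno i j i' j' m (by omega) hP hQ h1 h2).elim
  rw [← Finset.card_image_of_injOn hinj]
  have hA : |α| ≤ H := by rw [Int.abs_eq_natAbs]; omega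
  have hB : |β| ≤ H := by rw [Int.abs_eq_natAbs]; omega
  have hk0 : (0 : ℤ) ≤ k := by positivity
  apply aux_card _ _ (by exact_mod_cast hp.pos)
  · have h1 : 0 ≤ R - k * |β| := by nlinarith
    have h2 : 0 ≤ R - k * |α| := by nlinarith
    positivity
  · intro s hs t ht
    obtain ⟨⟨i, j⟩, hP, rfl⟩ := Finset.mem_image.1 hs
    obtain ⟨⟨i', j'⟩, hQ, rfl⟩ := Finset.mem_image.1 ht
    have hP1 := (Finset.mem_filter.1 hP).1
    have hQ1 := (Finset.mem_filter.1 hQ).1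
    rw [mem_auxS] at hP1 hQ1
    rw [← ZMod.intCast_zmod_eq_zero_iff_dvd]
    push_cast
    rw [hαβ]
    linear_combination (-(β : ZMod p)) * hP1.2 + (β : ZMod p) * hQ1.2
  · intro s hs t ht
    obtain ⟨⟨i, j⟩, hP, rfl⟩ := Finset.mem_image.1 hs
    obtain ⟨⟨i', j'⟩, hQ, rfl⟩ := Finset.mem_image.1 ht
    simp only [auxD, Finset.mem_filter] at hP hQ
    have hP1 := hP.1
    have hQ1 := hQ.1
    have hP2 := hP.2.1
    have hQ2 := hQ.2.1
    rw [mem_auxS] at hP1 hQ1 hP2 hQ2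
    obtain ⟨⟨⟨a1, a2⟩, b1, b2⟩, -⟩ := hP1
    obtain ⟨⟨⟨a3, a4⟩, b3, b4⟩, -⟩ := hP2
    obtain ⟨⟨⟨c1, c2⟩, d1, d2⟩, -⟩ := hQ1
    obtain ⟨⟨⟨c3, c4⟩, d3, d4⟩, -⟩ := hQ2
    exact aux_width α β i j i' j' k R hk0 a1 a2 a3 a4 b1 b2 b3 b4 c1 c2 c3 c4 d1 d2 d3 d4

lemma aux_cover (p : ℕ) (l c : ZMod p) (α β : ℤ) (H : ℕ) (hH : H = max α.natAbs β.natAbs)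
    (hH0 : 0 < H) (R : ℕ) :
    (auxS p l c R).card ≤ ∑ k ∈ Finset.range (R / H + 1), (auxD p l c R α β k).card := by
  have hsub : auxS p l c R ⊆ (Finset.range (R / H + 1)).biUnion
      (fun k => (auxD p l c R α β k).image (fun P => (P.1 + k * α, P.2 + k * β))) := by
    rintro ⟨i, j⟩ hP
    have hbd : ∀ k : ℕ, (i - k * α, j - k * β) ∈ auxS p l c R → k ≤ R / H := by
      intro k hk
      rw [mem_auxS] at hP hk
      rw [Nat.le_div_iff_mul_le hH0]
      have h1 : |(k : ℤ) * α| ≤ R := by rw [abs_le]; constructor <;> linarith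
      have h2 : |(k : ℤ) * β| ≤ R := by rw [abs_le]; constructor <;> linarith
      rw [abs_mul, Nat.abs_cast, Int.abs_eq_natAbs] at h1 h2
      norm_cast at h1 h2
      rcases max_choice α.natAbs β.natAbs with h | h <;> rw [hH, h] <;> assumption
    have hex : ∃ k : ℕ, (i - k * α, j - k * β) ∉ auxS p l c R :=
      ⟨R / H + 1, fun h => by have := hbd _ h; omega⟩
    classical
    have hf := Nat.find_spec hex
    have hfm := fun m => @Nat.find_min _ _ hex m
    set n := Nat.find hex
    have hn : n ≠ 0 := by
      intro h; rw [h] at hf; simp at hf; exact hf hP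
    obtain ⟨k, hk⟩ := Nat.exists_eq_succ_of_ne_zero hn
    have hkm := not_not.1 (hfm k (by omega))
    rw [hk] at hf
    refine Finset.mem_biUnion.2 ⟨k, Finset.mem_range.2 (Nat.lt_succ_of_le (hbd k hkm)),
      Finset.mem_image.2 ⟨(i - k * α, j - k * β), ?_, by simp⟩⟩
    refine Finset.mem_filter.2 ⟨hkm, by simpa using hP, ?_⟩
    intro h
    apply hf
    convert h using 2 <;> push_cast <;> ring
  refine (Finset.card_le_card hsub).trans (Finset.card_biUnion_le.trans ?_)
  exact Finset.sum_le_sum fun k _ => Finset.card_image_le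

lemma aux_sum (A B R p : ℝ) (n : ℕ) :
    ∑ k ∈ Finset.range (n + 1), (A * (R - k * B) + B * (R - k * A) + p) =
      (n + 1) * ((A + B) * R - n * (A * B)) + (n + 1) * p := by
  induction n with
  | zero => simp; ring
  | succ m ih => rw [Finset.sum_range_succ, ih]; push_cast; ring

lemma aux_final (A B R H p K : ℝ) (hA : 0 ≤ A) (hAH : A ≤ H) (hB : 0 ≤ B) (hBH : B ≤ H)
    (hAB : A = H ∨ B = H) (hH : 0 < H) (hHp : H * H ≤ p) (hR : 0 ≤ R) (hK : 0 ≤ K)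
    (hKR : K * H ≤ R) (hRK : R ≤ (K + 1) * H) :
    (K + 1) * ((A + B) * R - K * (A * B)) + (K + 1) * p ≤ R ^ 2 + 3 * R * p / H + 2 * p := by
  wlog h : B = H generalizing A B with hw
  · have := hw B A hB hBH hA hAH hAB.symm (hAB.resolve_right h)
    rw [add_comm A B, mul_comm A B]; exact this
  subst h
  have hp : 0 < p := by nlinarith
  set q := R / B with hq
  have hqR : R = q * B := by rw [hq]; field_simp
  have hKq : K ≤ q := by rw [hq, le_div_iff₀ hH]; exact hKR
  have h1 : (A + B) * R - K * (A * B) ≤ B * R + A * B := by nlinarith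
  have h2 : (K + 1) * ((A + B) * R - K * (A * B)) ≤ (q + 1) * (B * R + A * B) :=
    (mul_le_mul_of_nonneg_left h1 (by linarith)).trans
      (mul_le_mul_of_nonneg_right (by linarith) (by positivity))
  have h3 : (q + 1) * (B * R + A * B) = R ^ 2 + q * (A * B) + q * (B * B) + A * B := by
    rw [hqR]; ring
  have hABp : A * B ≤ p := by nlinarith
  have h4 : q * (A * B) ≤ q * p := mul_le_mul_of_nonneg_left hABp (by linarith)
  have h5 : q * (B * B) ≤ q * p := mul_le_mul_of_nonneg_left hHp (by linarith)
  have h6 : 3 * R * p / B = 3 * q * p := by rw [hq]; field_simp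
  rw [h6]
  nlinarith

lemma aux_main_s12 (p : ℕ) [Fact p.Prime] (l c : ZMod p) (hl : l ≠ 0) (R : ℕ) :
    ((auxS p l c R).card : ℝ) ≤ (R : ℝ) ^ 2 / p + 3 * R / (modularHeight p l : ℝ) + 2 := by
  have hp : p.Prime := Fact.out
  obtain ⟨α, β, hβ, hαβ, hH, hHH, hmin⟩ := aux_height_s12 p l
  set H := modularHeight p l
  have hβ0 : β ≠ 0 := by rintro rfl; simp at hβ
  have hα0 : α ≠ 0 := by
    rintro rfl
    have h : (β : ZMod p) ≠ 0 := by rwa [Ne, ZMod.intCast_zmod_eq_zero_iff_dvd]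
    simp at hαβ
    tauto
  have hH0 : 0 < H := by omega
  have hHp : H < p := by
    have := hp.two_le
    nlinarith
  have hcov := aux_cover p l c α β H hH hH0 R
  have hKR : R / H * H ≤ R := Nat.div_mul_le_self R H
  have hRK : R ≤ (R / H + 1) * H := by
    have := Nat.lt_mul_div_succ R hH0
    rw [mul_comm]; exact this.le
  set K := R / H
  have hD : ∀ k ∈ Finset.range (K + 1), (p : ℝ) * ((auxD p l c R α β k).card : ℝ) ≤
      |(α : ℝ)| * (R - k * |(β : ℝ)|) + |(β : ℝ)| * (R - k * |(α : ℝ)|) + p := by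
    intro k hk
    have hk' : k ≤ K := by simpa [Nat.lt_succ_iff] using hk
    have := aux_D p l c α β H hH hHp hα0 hβ0 hαβ hmin R k
      (by exact_mod_cast (Nat.mul_le_mul_right H hk').trans hKR)
    exact_mod_cast this
  have h1 := Finset.sum_le_sum hD
  rw [← Finset.mul_sum, aux_sum] at h1
  have h2 : ((auxS p l c R).card : ℝ) ≤
      ∑ k ∈ Finset.range (K + 1), ((auxD p l c R α β k).card : ℝ) := by exact_mod_cast hcov
  have hp0 : (0 : ℝ) < p := by exact_mod_cast hp.pos
  have h3 := mul_le_mul_of_nonneg_left h2 hp0.le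
  have hAa : |(α : ℝ)| = (α.natAbs : ℝ) := by rw [Nat.cast_natAbs]; simp
  have hBb : |(β : ℝ)| = (β.natAbs : ℝ) := by rw [Nat.cast_natAbs]; simp
  have h4 := aux_final |(α : ℝ)| |(β : ℝ)| R H p K (abs_nonneg _)
    (by rw [hAa]; exact_mod_cast (by omega : α.natAbs ≤ H)) (abs_nonneg _)
    (by rw [hBb]; exact_mod_cast (by omega : β.natAbs ≤ H))
    (by rw [hAa, hBb]; exact_mod_cast (by omega : α.natAbs = H ∨ β.natAbs = H))
    (by exact_mod_cast hH0) (by exact_mod_cast hHH) (by positivity) (by positivity)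
    (by exact_mod_cast hKR) (by exact_mod_cast hRK)
  have h5 := h3.trans (h1.trans h4)
  have hH0' : (0 : ℝ) < H := by exact_mod_cast hH0
  have h6 : (R : ℝ) ^ 2 + 3 * R * p / H + 2 * p = p * ((R : ℝ) ^ 2 / p + 3 * R / H + 2) := by
    field_simp
  rw [h6] at h5
  exact le_of_mul_le_mul_left h5 hp0

/-- Let `p` be a prime, `x̄, ȳ ∈ ℤ_p` nonzero, and let
`Ī = {ā + ī·b̄ : i < r}` be an arithmetic progression with `b̄ ≠ 0`, `1 ≤ r ≤ p`. Then
the number of `σ̄ ∈ ℤ_p` with `σ̄x̄ ∈ Ī` and `σ̄ȳ ∈ Ī` is at most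
`r²/p + 3r/H_p(x̄ȳ⁻¹) + 2`; equivalently the probability for uniform `σ̄` is at most
`r²/p² + 3r/(p·H_p(x̄ȳ⁻¹)) + 2/p`. -/
theorem stmt_12 (p : ℕ) (hp : p.Prime) (x y : ZMod p) (hx : x ≠ 0) (hy : y ≠ 0)
    (a b : ZMod p) (hb : b ≠ 0) (r : ℕ) (hr1 : 1 ≤ r) (hrp : r ≤ p) :
    ((((Finset.range p).filter fun s : ℕ =>
          (s : ZMod p) * x ∈ (Finset.range r).image (fun i : ℕ => a + (i : ZMod p) * b) ∧
          (s : ZMod p) * y ∈ (Finset.range r).image (fun i : ℕ => a + (i : ZMod p) * b)).card : ℝ)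
        ≤ (r : ℝ) ^ 2 / p + 3 * r / (modularHeight p (x * y⁻¹) : ℝ) + 2)
    ∧ ((((Finset.range p).filter fun s : ℕ =>
          (s : ZMod p) * x ∈ (Finset.range r).image (fun i : ℕ => a + (i : ZMod p) * b) ∧
          (s : ZMod p) * y ∈ (Finset.range r).image (fun i : ℕ => a + (i : ZMod p) * b)).card : ℝ)
          / p
        ≤ (r : ℝ) ^ 2 / (p : ℝ) ^ 2 + 3 * r / ((p : ℝ) * (modularHeight p (x * y⁻¹) : ℝ))
          + 2 / p) := by
  haveI : Fact p.Prime := ⟨hp⟩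
  set F := (Finset.range p).filter fun s : ℕ =>
          (s : ZMod p) * x ∈ (Finset.range r).image (fun i : ℕ => a + (i : ZMod p) * b) ∧
          (s : ZMod p) * y ∈ (Finset.range r).image (fun i : ℕ => a + (i : ZMod p) * b) with hF
  have hp0 : (0 : ℝ) < p := by exact_mod_cast hp.pos
  have main : (F.card : ℝ) ≤ (r : ℝ) ^ 2 / p + 3 * r / (modularHeight p (x * y⁻¹) : ℝ) + 2 := by
    obtain ⟨R, rfl⟩ : ∃ R, r = R + 1 := ⟨r - 1, by omega⟩
    have h1 := aux_main_s12 p (x * y⁻¹) ((x * y⁻¹ - 1) * a * b⁻¹)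
      (mul_ne_zero hx (inv_ne_zero hy)) R
    have hch : ∀ s ∈ F, ∃ P : ℤ × ℤ, P ∈ auxS p (x * y⁻¹) ((x * y⁻¹ - 1) * a * b⁻¹) R ∧
        (s : ZMod p) * y = a + (P.2 : ZMod p) * b := by
      intro s hs
      obtain ⟨-, h2, h3⟩ := Finset.mem_filter.1 hs
      obtain ⟨i, hi, hi'⟩ := Finset.mem_image.1 h2
      obtain ⟨j, hj, hj'⟩ := Finset.mem_image.1 h3
      rw [Finset.mem_range] at hi hj
      refine ⟨((i : ℤ), (j : ℤ)), ?_, by simpa using hj'.symm⟩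
      rw [mem_auxS]
      refine ⟨by omega, ?_⟩
      have e1 : (i : ZMod p) = (s * x - a) * b⁻¹ := by rw [← hi']; field_simp; ring
      have e2 : (j : ZMod p) = (s * y - a) * b⁻¹ := by rw [← hj']; field_simp; ring
      push_cast
      rw [e1, e2]; field_simp; ring
    choose! f hf1 hf2 using hch
    have hcard : F.card ≤ (auxS p (x * y⁻¹) ((x * y⁻¹ - 1) * a * b⁻¹) R).card := by
      apply Finset.card_le_card_of_injOn f hf1
      intro s hs t ht hst
      rw [Finset.mem_coe] at hs ht
      have e : (s : ZMod p) * y = t * y := by rw [hf2 s hs, hf2 t ht, hst]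
      have e' := mul_right_cancel₀ hy e
      rw [ZMod.natCast_eq_natCast_iff] at e'
      exact Nat.ModEq.eq_of_lt_of_lt e' (Finset.mem_range.1 (Finset.mem_filter.1 hs).1)
        (Finset.mem_range.1 (Finset.mem_filter.1 ht).1)
    have hcard' : (F.card : ℝ) ≤ (auxS p (x * y⁻¹) ((x * y⁻¹ - 1) * a * b⁻¹) R).card := by
      exact_mod_cast hcard
    refine hcard'.trans (h1.trans ?_)
    push_cast
    gcongr <;> linarith
  refine ⟨main, ?_⟩
  have h := div_le_div_of_nonneg_right main hp0.le
  refine h.trans (le_of_eq ?_)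
  rw [add_div, add_div, div_div, div_div, ← sq, mul_comm (p : ℝ) (modularHeight p _ : ℝ)]
end

section
/- There is a universal constant C such that the following holds. Let U ≥ 2 and let X ⊆ {0, …, U−1} be a set of k ≥ 1 keys. Let p be a prime with p > 4U², let m be an integer with 1 ≤ m ≤ U, let h be a random linear hash function with parameters p and m, fix a key x ∈ {0, …, U−1} with x ∉ X and buckets a, b ∈ {0, …, m−1}, and let y, z ∈ X be chosen independently and uniformly at random (independently of h). Then Pr( h(y) = h(z) = b | h(x) = a ) ≤ 1/m² + C · U · log₂(U) / (m · k²). -/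
lemma lemB (F : Finset ℤ) (hF : F.Nonempty) (n : ℕ) (hn : 0 < n)
    (hc : ∀ f ∈ F, ∀ g ∈ F, (n : ℤ) ∣ f - g) :
    ∃ lo ∈ F, ∃ hi ∈ F, lo ≤ hi ∧ (n : ℤ) * F.card ≤ hi - lo + n := by
  refine ⟨F.min' hF, F.min'_mem hF, F.max' hF, F.max'_mem hF, F.min'_le _ (F.max'_mem hF), ?_⟩
  set hi := F.max' hF with hhi
  set lo := F.min' hF with hlo
  have hle : lo ≤ hi := F.min'_le _ (F.max'_mem hF)
  have key : ((F.erase hi) ×ˢ Finset.range n).card ≤ (Finset.Ico lo hi).card := by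
    apply Finset.card_le_card_of_injOn (fun w => w.1 + (w.2 : ℤ))
    · rintro ⟨f, i⟩ h
      simp only [Finset.coe_product, Set.mem_prod, Finset.mem_coe, Finset.mem_erase,
        Finset.mem_range] at h
      obtain ⟨⟨h1, h2⟩, h3⟩ := h
      have h4 : f ≤ hi := F.le_max' _ h2
      have h5 : lo ≤ f := F.min'_le _ h2
      have h6 := hc hi (F.max'_mem hF) f h2
      have h7 : (n : ℤ) ≤ hi - f := Int.le_of_dvd (by omega) h6
      simp only [Finset.coe_Ico, Set.mem_Ico]
      omega
    · rintro ⟨f, i⟩ h ⟨g, j⟩ h' hfg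
      simp only [Finset.coe_product, Set.mem_prod, Finset.mem_coe, Finset.mem_erase,
        Finset.mem_range] at h h' hfg
      have h6 := hc f h.1.2 g h'.1.2
      have h7 : f - g = 0 := by
        apply Int.eq_zero_of_abs_lt_dvd h6
        rw [abs_lt]; omega
      have : f = g := by omega
      subst this
      simp at hfg
      simp [hfg]
  rw [Finset.card_product, Finset.card_range, Finset.card_erase_of_mem (F.max'_mem hF),
    Int.card_Ico] at key
  have hp := Finset.card_pos.mpr hF
  obtain ⟨c, hcc⟩ : ∃ c, F.card = c + 1 := ⟨F.card - 1, by omega⟩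
  rw [hcc] at key ⊢
  simp only [Nat.add_sub_cancel] at key
  have : ((c * n : ℕ) : ℤ) ≤ hi - lo := by
    have := (Int.ofNat_le.mpr key); rw [Int.toNat_of_nonneg (by omega)] at this; exact this
  push_cast at this ⊢
  linarith

lemma lemA (p m : ℕ) (r s q : ℤ) (hp : p.Prime) (hm : 0 < m) (hmp : m < p) (hs : 0 < s)
    (hrs : |r| ≤ s) (hco : IsCoprime r s) (b : ℤ) (S : Finset (ℤ × ℤ))
    (hS : ∀ w ∈ S, 0 ≤ w.1 ∧ w.1 < p ∧ 0 ≤ w.2 ∧ w.2 < p ∧ (m : ℤ) ∣ w.1 - b ∧ (m : ℤ) ∣ w.2 - b ∧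
      (p : ℤ) ∣ s * (w.2 - q) - r * (w.1 - q)) :
    s * m ^ 2 * S.card ≤ p * s + p * m + 2 * s ^ 2 * m + s * m ^ 2 := by
  classical
  have hp0 : (0 : ℤ) < p := by exact_mod_cast hp.pos
  have hm0 : (0 : ℤ) < m := by exact_mod_cast hm
  set tf : ℤ × ℤ → ℤ := fun w => (s * (w.2 - q) - r * (w.1 - q)) / p with htf
  have htp : ∀ w ∈ S, tf w * p = s * (w.2 - q) - r * (w.1 - q) := fun w hw =>
    Int.ediv_mul_cancel (hS w hw).2.2.2.2.2.2
  set T := S.image tf with hT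
  have hcop : IsCoprime (m : ℤ) (p : ℤ) := by
    rw [Nat.isCoprime_iff_coprime]
    exact (Nat.coprime_of_lt_prime hm.ne' hmp hp).symm
  have hTc : ∀ t ∈ T, ∀ t' ∈ T, (m : ℤ) ∣ t - t' := by
    intro t ht t' ht'
    obtain ⟨w, hw, rfl⟩ := Finset.mem_image.mp ht
    obtain ⟨w', hw', rfl⟩ := Finset.mem_image.mp ht'
    apply hcop.dvd_of_dvd_mul_right
    have e : (tf w - tf w') * p = s * ((w.2 - b) - (w'.2 - b)) - r * ((w.1 - b) - (w'.1 - b)) := by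
      linear_combination htp w hw - htp w' hw'
    rw [e]
    obtain ⟨-, -, -, -, h1, h2, -⟩ := hS w hw
    obtain ⟨-, -, -, -, h3, h4, -⟩ := hS w' hw'
    exact dvd_sub (Dvd.dvd.mul_left (dvd_sub h2 h4) _) (Dvd.dvd.mul_left (dvd_sub h1 h3) _)
  have hTcard : (m : ℤ) * T.card ≤ 2 * s + m := by
    rcases T.eq_empty_or_nonempty with h0 | h0
    · rw [h0]; simp; positivity
    obtain ⟨lo, hlo, hi, hhi, hle, hc⟩ := lemB T h0 m hm hTc
    obtain ⟨w, hw, rfl⟩ := Finset.mem_image.mp hlo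
    obtain ⟨w', hw', rfl⟩ := Finset.mem_image.mp hhi
    have e : (tf w' - tf w) * p = s * (w'.2 - w.2) - r * (w'.1 - w.1) := by
      linear_combination htp w' hw' - htp w hw
    obtain ⟨h1, h2, h3, h4, -⟩ := hS w hw
    obtain ⟨h5, h6, h7, h8, -⟩ := hS w' hw'
    have e1 : s * (w'.2 - w.2) ≤ s * p := by
      apply mul_le_mul_of_nonneg_left _ hs.le; linarith
    have e2 : - (r * (w'.1 - w.1)) ≤ s * p := by
      calc - (r * (w'.1 - w.1)) ≤ |r * (w'.1 - w.1)| := neg_le_abs _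
        _ = |r| * |w'.1 - w.1| := abs_mul _ _
        _ ≤ s * p := by
          apply mul_le_mul hrs _ (abs_nonneg _) hs.le
          rw [abs_le]; constructor <;> linarith
    have e3 : tf w' - tf w ≤ 2 * s := by
      apply le_of_mul_le_mul_right _ hp0
      rw [e]; linarith
    linarith
  set J : ℤ → Finset ℤ := fun t => (Finset.Ico 0 (p : ℤ)).filter
    (fun u => 0 ≤ r * (u - q) + s * q + t * p ∧ r * (u - q) + s * q + t * p < s * p) with hJ
  have hF : ∀ t ∈ T, s * m * ((S.filter (fun w => tf w = t)).card : ℤ) ≤ (J t).card + s * m := by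
    intro t ht
    set St := S.filter (fun w => tf w = t) with hSt
    have hmem : ∀ w ∈ St, w ∈ S ∧ t * p = s * (w.2 - q) - r * (w.1 - q) := by
      intro w hw
      obtain ⟨h1, h2⟩ := Finset.mem_filter.mp hw
      exact ⟨h1, h2 ▸ htp w h1⟩
    have hcard : (St.image Prod.fst).card = St.card := by
      apply Finset.card_image_of_injOn
      intro w hw w' hw' h
      have h1 := (hmem w hw).2
      have h2 := (hmem w' hw').2
      have h : w.1 = w'.1 := h
      rw [h1, h] at h2
      have h3 : s * w.2 = s * w'.2 := by linarith
      exact Prod.ext h (mul_left_cancel₀ hs.ne' h3)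
    have hne : (St.image Prod.fst).Nonempty := by
      obtain ⟨w, hw, h⟩ := Finset.mem_image.mp ht
      exact ⟨w.1, Finset.mem_image_of_mem _ (Finset.mem_filter.mpr ⟨hw, h⟩)⟩
    have hsn : ((s.toNat * m : ℕ) : ℤ) = s * m := by
      push_cast; rw [Int.toNat_of_nonneg hs.le]
    obtain ⟨lo, hlo, hi, hhi, hle, hc⟩ := lemB (St.image Prod.fst) hne (s.toNat * m)
      (by have : 0 < s.toNat := by omega
          positivity) (by
      intro f hf g hg
      obtain ⟨w, hw, rfl⟩ := Finset.mem_image.mp hf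
      obtain ⟨w', hw', rfl⟩ := Finset.mem_image.mp hg
      obtain ⟨hw, e⟩ := hmem w hw
      obtain ⟨hw', e'⟩ := hmem w' hw'
      obtain ⟨-, -, -, -, h1, h2, -⟩ := hS w hw
      obtain ⟨-, -, -, -, h3, h4, -⟩ := hS w' hw'
      rw [hsn]
      obtain ⟨c, hc⟩ := dvd_sub h1 h3
      obtain ⟨d, hd⟩ := dvd_sub h2 h4
      have e1 : (m : ℤ) * (s * d) = m * (r * c) := by
        linear_combination e' - e - s * hd + r * hc
      have e2 := mul_left_cancel₀ hm0.ne' e1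
      have e3 : s ∣ c := by
        apply hco.symm.dvd_of_dvd_mul_left
        rw [← e2]; exact dvd_mul_right _ _
      obtain ⟨k, rfl⟩ := e3
      exact ⟨k, by linear_combination hc⟩)
    rw [hcard, hsn] at hc
    have hsub : Finset.Icc lo hi ⊆ J t := by
      obtain ⟨w, hw, rfl⟩ := Finset.mem_image.mp hlo
      obtain ⟨w', hw', rfl⟩ := Finset.mem_image.mp hhi
      obtain ⟨hw, e⟩ := hmem w hw
      obtain ⟨hw', e'⟩ := hmem w' hw'
      obtain ⟨h1, h2, h3, h4, -⟩ := hS w hw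
      obtain ⟨h5, h6, h7, h8, -⟩ := hS w' hw'
      intro u hu
      rw [Finset.mem_Icc] at hu
      have a1 : 0 ≤ s * w.2 := mul_nonneg hs.le h3
      have a2 : 0 ≤ s * w'.2 := mul_nonneg hs.le h7
      have a3 : s * w.2 < s * p := mul_lt_mul_of_pos_left h4 hs
      have a4 : s * w'.2 < s * p := mul_lt_mul_of_pos_left h8 hs
      rw [hJ, Finset.mem_filter, Finset.mem_Ico]
      refine ⟨⟨by linarith, by linarith⟩, ?_⟩
      rcases le_total 0 r with hr | hr
      · have b1 := mul_le_mul_of_nonneg_left hu.1 hr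
        have b2 := mul_le_mul_of_nonneg_left hu.2 hr
        constructor <;> linarith
      · have b1 := mul_le_mul_of_nonpos_left hu.1 hr
        have b2 := mul_le_mul_of_nonpos_left hu.2 hr
        constructor <;> linarith
    have := Finset.card_le_card hsub
    rw [Int.card_Icc] at this
    have h2 : hi + 1 - lo ≤ (J t).card := by omega
    linarith
  have hsum : (m : ℤ) * ∑ t ∈ T, ((J t).card : ℤ) ≤ p * (s + m) := by
    have hdc := Finset.sum_card_bipartiteAbove_eq_sum_card_bipartiteBelow
      (s := T) (t := Finset.Ico 0 (p : ℤ)) (fun t u => 0 ≤ r * (u - q) + s * q + t * p ∧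
        r * (u - q) + s * q + t * p < s * p)
    have : ∑ t ∈ T, ((J t).card : ℤ) = ∑ u ∈ Finset.Ico 0 (p : ℤ), ((T.filter (fun t =>
        0 ≤ r * (u - q) + s * q + t * p ∧ r * (u - q) + s * q + t * p < s * p)).card : ℤ) := by
      exact_mod_cast hdc
    rw [this, Finset.mul_sum]
    calc _ ≤ ∑ u ∈ Finset.Ico 0 (p : ℤ), (s + m) := by
          apply Finset.sum_le_sum
          intro u _
          set T' := T.filter (fun t =>
            0 ≤ r * (u - q) + s * q + t * p ∧ r * (u - q) + s * q + t * p < s * p) with hT'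
          rcases T'.eq_empty_or_nonempty with h0 | h0
          · rw [h0]; simp; positivity
          obtain ⟨lo, hlo, hi, hhi, hle, hc⟩ := lemB T' h0 m hm (fun f hf g hg =>
            hTc f (Finset.mem_filter.mp hf).1 g (Finset.mem_filter.mp hg).1)
          have h1 := (Finset.mem_filter.mp hlo).2
          have h2 := (Finset.mem_filter.mp hhi).2
          have : hi - lo ≤ s := by
            apply le_of_mul_le_mul_right _ hp0
            linarith
          linarith
      _ = p * (s + m) := by simp
  have hScard : (S.card : ℤ) = ∑ t ∈ T, ((S.filter (fun w => tf w = t)).card : ℤ) := by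
    exact_mod_cast Finset.card_eq_sum_card_fiberwise (f := tf) (s := S) (t := T)
      (fun w hw => Finset.mem_image_of_mem _ hw)
  have h1 : s * m * (S.card : ℤ) ≤ ∑ t ∈ T, ((J t).card : ℤ) + T.card * (s * m) := by
    rw [hScard, Finset.mul_sum]
    calc _ ≤ ∑ t ∈ T, (((J t).card : ℤ) + s * m) := Finset.sum_le_sum hF
      _ = _ := by rw [Finset.sum_add_distrib]; simp
  have h2 := mul_le_mul_of_nonneg_left h1 hm0.le
  have h3 := mul_le_mul_of_nonneg_left hTcard (mul_pos hs hm0).le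
  nlinarith

lemma lemG (U : ℕ) : ∑ e ∈ Finset.Ioc 0 U, ∑ d ∈ Finset.Ioc 0 U,
    (Nat.gcd d e : ℝ) / (max d e : ℕ) ≤ 2 * (U * (1 + Real.log U)) := by
  have h1 : ∀ e ∈ Finset.Ioc 0 U, ∑ d ∈ (Finset.Ioc 0 U).filter (· ≤ e), (Nat.gcd d e : ℝ) / e ≤
      e.divisors.card := by
    intro e he
    rw [Finset.mem_Ioc] at he
    rw [← Finset.sum_div, div_le_iff₀ (by exact_mod_cast he.1)]
    have : (Finset.Ioc 0 U).filter (· ≤ e) = Finset.Ioc 0 e := by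
      ext d; simp; omega
    rw [this]
    norm_cast
    calc ∑ d ∈ Finset.Ioc 0 e, Nat.gcd d e
        ≤ ∑ d ∈ Finset.Ioc 0 e, ∑ g ∈ e.divisors, if g ∣ d then g else 0 := by
          apply Finset.sum_le_sum
          intro d hd
          have := Finset.single_le_sum (f := fun g => if g ∣ d then g else 0) (s := e.divisors)
            (fun _ _ => Nat.zero_le _) (a := Nat.gcd d e)
            (Nat.mem_divisors.mpr ⟨Nat.gcd_dvd_right _ _, by omega⟩)
          simpa [Nat.gcd_dvd_left] using this
      _ = ∑ g ∈ e.divisors, ∑ d ∈ Finset.Ioc 0 e, if g ∣ d then g else 0 := Finset.sum_comm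
      _ = ∑ g ∈ e.divisors, e := by
          apply Finset.sum_congr rfl
          intro g hg
          rw [← Finset.sum_filter, Finset.sum_const, Nat.Ioc_filter_dvd_card_eq_div, smul_eq_mul]
          exact Nat.div_mul_cancel (Nat.dvd_of_mem_divisors hg)
      _ = e.divisors.card * e := by simp
  have h2 : ∑ e ∈ Finset.Ioc 0 U, (e.divisors.card : ℝ) ≤ U * (1 + Real.log U) := by
    have h3 := ArithmeticFunction.sum_Ioc_sigma0_eq_sum_div U
    simp only [ArithmeticFunction.sigma_zero_apply] at h3
    have h4 : ∑ e ∈ Finset.Ioc 0 U, (e.divisors.card : ℝ) = ∑ n ∈ Finset.Ioc 0 U, ((U / n : ℕ) : ℝ) := by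
      exact_mod_cast h3
    rw [h4]
    calc _ ≤ ∑ n ∈ Finset.Ioc 0 U, (U : ℝ) * (n : ℝ)⁻¹ := by
          apply Finset.sum_le_sum
          intro n _
          rw [← div_eq_mul_inv]; exact Nat.cast_div_le
      _ = U * (harmonic U : ℝ) := by
          rw [← Finset.mul_sum, harmonic_eq_sum_Icc]; push_cast; rfl
      _ ≤ _ := mul_le_mul_of_nonneg_left (harmonic_le_one_add_log U) (Nat.cast_nonneg _)
  have h5 : ∑ e ∈ Finset.Ioc 0 U, ∑ d ∈ (Finset.Ioc 0 U).filter (· ≤ e), (Nat.gcd d e : ℝ) / e ≤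
      U * (1 + Real.log U) := (Finset.sum_le_sum h1).trans h2
  calc _ ≤ ∑ e ∈ Finset.Ioc 0 U, ∑ d ∈ Finset.Ioc 0 U,
        ((if d ≤ e then (Nat.gcd d e : ℝ) / e else 0) +
          (if e ≤ d then (Nat.gcd e d : ℝ) / d else 0)) := by
        apply Finset.sum_le_sum; intro e _
        apply Finset.sum_le_sum; intro d _
        have n1 : 0 ≤ (Nat.gcd d e : ℝ) / e := by positivity
        have n2 : 0 ≤ (Nat.gcd e d : ℝ) / d := by positivity
        rcases le_total d e with h | h
        · rw [max_eq_right h, if_pos h]; split_ifs <;> linarith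
        · rw [max_eq_left h, if_pos h, Nat.gcd_comm d e]; split_ifs
          · rw [Nat.gcd_comm d e] at n1; linarith
          · linarith
    _ = (∑ e ∈ Finset.Ioc 0 U, ∑ d ∈ (Finset.Ioc 0 U).filter (· ≤ e), (Nat.gcd d e : ℝ) / e) +
        (∑ e ∈ Finset.Ioc 0 U, ∑ d ∈ (Finset.Ioc 0 U).filter (· ≤ e), (Nat.gcd d e : ℝ) / e) := by
        simp only [Finset.sum_add_distrib, Finset.sum_filter]
        congr 1
        exact Finset.sum_comm
    _ ≤ _ := by linarith

lemma lemTwo (U x : ℕ) (X : Finset ℕ) (hX : X ⊆ Finset.range U) (hx : x < U) (hxX : x ∉ X)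
    (f : ℕ → ℝ) (hf : ∀ n, 0 ≤ f n) :
    ∑ y ∈ X, f ((y : ℤ) - x).natAbs ≤ 2 * ∑ d ∈ Finset.Ioc 0 U, f d := by
  have hmap : ∀ y ∈ X, ((y : ℤ) - x).natAbs ∈ Finset.Ioc 0 U := by
    intro y hy
    have := Finset.mem_range.mp (hX hy)
    have h2 : y ≠ x := fun h => hxX (h ▸ hy)
    rw [Finset.mem_Ioc]; omega
  rw [← Finset.sum_fiberwise_of_maps_to hmap, Finset.mul_sum]
  apply Finset.sum_le_sum
  intro d _
  rw [Finset.sum_congr rfl (g := fun _ => f d) (fun y hy => by rw [(Finset.mem_filter.mp hy).2]),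
    Finset.sum_const, nsmul_eq_mul]
  apply mul_le_mul_of_nonneg_right _ (hf d)
  have : X.filter (fun y : ℕ => ((y : ℤ) - x).natAbs = d) ⊆ {x + d, x - d} := by
    intro y hy
    have := (Finset.mem_filter.mp hy).2
    simp; omega
  exact_mod_cast (Finset.card_le_card this).trans Finset.card_le_two

lemma lemPair (U p m x y z b q : ℕ) (hp : p.Prime) (hpU : 4 * U ^ 2 < p) (hm : 0 < m)
    (hmU : m ≤ U) (hx : x < U) (hz : z < U) (hzx : z ≠ x)
    (hyz : ((y : ℤ) - x).natAbs ≤ ((z : ℤ) - x).natAbs) :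
    (((Finset.range p ×ˢ Finset.range p).filter fun w =>
      ((w.1 * y + w.2) % p) % m = b ∧ ((w.1 * z + w.2) % p) % m = b ∧
        (w.1 * x + w.2) % p = q).card : ℝ) ≤
    p * (1 / (m : ℝ) ^ 2 + 2 / m * ((Nat.gcd ((y : ℤ) - x).natAbs ((z : ℤ) - x).natAbs : ℝ) /
      (((z : ℤ) - x).natAbs : ℝ))) := by
  set W := ((Finset.range p ×ˢ Finset.range p).filter fun w =>
      ((w.1 * y + w.2) % p) % m = b ∧ ((w.1 * z + w.2) % p) % m = b ∧
        (w.1 * x + w.2) % p = q) with hW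
  have hUp : U < p := by nlinarith
  have hp0 := hp.pos
  set d : ℤ := (y : ℤ) - x with hd
  set e : ℤ := (z : ℤ) - x with he
  have he0 : e ≠ 0 := by omega
  have heU : |e| < U := by rw [abs_lt]; omega
  have hg0 : 0 < Int.gcd d e := Int.gcd_pos_of_ne_zero_right _ he0
  obtain ⟨g, d', e', hgpos, hco, hdd, hee⟩ := Int.exists_gcd_one' hg0
  have hgg : Int.gcd d e = g := by
    rw [hdd, hee, Int.gcd_mul_right, hco]; simp
  have he'0 : e' ≠ 0 := by rintro rfl; simp at hee; exact he0 hee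
  have hsgn : IsUnit (SignType.sign e' : ℤ) := by
    rcases lt_or_gt_of_ne he'0 with h | h <;> simp [h]
  set s : ℤ := SignType.sign e' * e' with hs
  set r : ℤ := SignType.sign e' * d' with hr
  have hsabs : s = |e'| := by rw [hs]; exact sign_mul_self e'
  have hrabs : |r| = |d'| := by
    rw [hr, abs_mul, Int.isUnit_iff_abs_eq.mp hsgn, one_mul]
  have hspos : 0 < s := by rw [hsabs]; exact abs_pos.mpr he'0
  have hgz : (0 : ℤ) < g := by exact_mod_cast hgpos
  have hrs : |r| ≤ s := by
    rw [hrabs, hsabs]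
    have h1 : |d| ≤ |e| := by
      rw [← Int.natCast_natAbs d, ← Int.natCast_natAbs e]; exact_mod_cast hyz
    rw [hdd, hee, abs_mul, abs_mul] at h1
    exact le_of_mul_le_mul_right h1 (abs_pos.mpr hgz.ne')
  have hcop : IsCoprime r s := by
    rw [hr, hs]
    exact (isCoprime_mul_unit_left hsgn _ _).mpr (Int.isCoprime_iff_gcd_eq_one.mpr hco)
  have hse : s * g = |e| := by
    rw [hsabs, hee, abs_mul, abs_of_pos hgz]
  have hsU : s ≤ U := by nlinarith
  have mod : ∀ n : ℕ, ((n % p : ℕ) : ℤ) = n - p * ((n / p : ℕ) : ℤ) := by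
    intro n
    have := Nat.div_add_mod n p
    have h2 : ((p * (n / p) + n % p : ℕ) : ℤ) = n := by rw [this]
    push_cast at h2 ⊢
    linarith
  set φ : ℕ × ℕ → ℤ × ℤ := fun w =>
    ((((w.1 * z + w.2) % p : ℕ) : ℤ), (((w.1 * y + w.2) % p : ℕ) : ℤ)) with hφ
  have hinj : Set.InjOn φ W := by
    rintro ⟨σ, τ⟩ h ⟨σ', τ'⟩ h' hh
    simp only [hW, Finset.coe_filter, Finset.mem_product, Finset.mem_range, Set.mem_ofPred_eq] at h h'
    obtain ⟨⟨h1, h2⟩, -, -, h3⟩ := h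
    obtain ⟨⟨h1', h2'⟩, -, -, h3'⟩ := h'
    have hu : (((σ * z + τ) % p : ℕ) : ℤ) = (((σ' * z + τ') % p : ℕ) : ℤ) := congrArg Prod.fst hh
    have hq : (((σ * x + τ) % p : ℕ) : ℤ) = (((σ' * x + τ') % p : ℕ) : ℤ) := by rw [h3, h3']
    rw [mod, mod] at hu hq
    push_cast at hu hq
    have hdv : (p : ℤ) ∣ ((σ : ℤ) - σ') * e := by
      refine ⟨((σ * z + τ : ℤ) / p) - ((σ' * z + τ' : ℤ) / p)
        - ((σ * x + τ : ℤ) / p) + ((σ' * x + τ' : ℤ) / p), ?_⟩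
      rw [he]
      linear_combination hu - hq
    have hpz : Prime (p : ℤ) := Nat.prime_iff_prime_int.mp hp
    have hs' : (σ : ℤ) - σ' = 0 := by
      rcases hpz.dvd_or_dvd hdv with h | h
      · apply Int.eq_zero_of_abs_lt_dvd h
        rw [abs_lt]; omega
      · exact absurd (Int.eq_zero_of_abs_lt_dvd h (by omega)) he0
    have hσ : σ = σ' := by omega
    subst hσ
    have ht : (τ : ℤ) - τ' = 0 := by
      apply Int.eq_zero_of_abs_lt_dvd (m := (p : ℤ))
      · exact ⟨((σ * x + τ : ℤ) / p) - ((σ * x + τ' : ℤ) / p), by linear_combination hq⟩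
      · rw [abs_lt]; omega
    have : τ = τ' := by omega
    rw [this]
  have key := lemA p m r s q hp hm (by omega) hspos hrs hcop b (W.image φ) (by
    intro w hw
    obtain ⟨⟨σ, τ⟩, hw1, rfl⟩ := Finset.mem_image.mp hw
    obtain ⟨-, h1, h2, h3⟩ := Finset.mem_filter.mp hw1
    simp only at h1 h2 h3
    refine ⟨by positivity, ?_, by positivity, ?_, ?_, ?_, ?_⟩
    · exact Int.ofNat_lt.mpr (Nat.mod_lt _ hp0)
    · exact Int.ofNat_lt.mpr (Nat.mod_lt _ hp0)
    · apply Int.ModEq.dvd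
      apply Int.natCast_modEq_iff.mpr
      show b % m = _ % m
      rw [h2, ← h2, Nat.mod_mod]
    · apply Int.ModEq.dvd
      apply Int.natCast_modEq_iff.mpr
      show b % m = _ % m
      rw [h1, ← h1, Nat.mod_mod]
    · simp only [hφ]
      rw [← h3, mod, mod, mod]
      refine ⟨s * (((σ * x + τ : ℕ) / p : ℕ) - ((σ * y + τ : ℕ) / p : ℕ)) -
        r * (((σ * x + τ : ℕ) / p : ℕ) - ((σ * z + τ : ℕ) / p : ℕ)), ?_⟩
      have hrel : s * ((y : ℤ) - x) = r * ((z : ℤ) - x) := by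
        rw [← hd, ← he, hdd, hee, hs, hr]; ring
      push_cast
      linear_combination (σ : ℤ) * hrel)
  rw [Finset.card_image_of_injOn hinj] at key
  have hmz : (0 : ℤ) < m := by exact_mod_cast hm
  have hmUz : (m : ℤ) ≤ U := by exact_mod_cast hmU
  have hpUz : 4 * (U : ℤ) ^ 2 < p := by exact_mod_cast hpU
  have k1 : s ^ 2 ≤ (U : ℤ) ^ 2 := pow_le_pow_left₀ hspos.le hsU 2
  have k2 : s * m ≤ (U : ℤ) ^ 2 := by rw [sq]; exact mul_le_mul hsU hmUz hmz.le (by positivity)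
  have key2 : s * m ^ 2 * W.card ≤ p * s + 2 * p * m := by
    have k3 : 4 * (s ^ 2 * m) ≤ p * m := by
      rw [← mul_assoc]; exact mul_le_mul_of_nonneg_right (by linarith) hmz.le
    have k4 : 4 * (s * m ^ 2) ≤ p * m := by
      calc 4 * (s * (m : ℤ) ^ 2) = (4 * (s * m)) * m := by ring
        _ ≤ _ := mul_le_mul_of_nonneg_right (by linarith) hmz.le
    have : 0 < (p : ℤ) * m := by positivity
    linarith
  have key3 : (s : ℝ) * (m : ℝ) ^ 2 * W.card ≤ p * s + 2 * p * m := by exact_mod_cast key2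
  have hsR : (0 : ℝ) < s := by exact_mod_cast hspos
  have hmR : (0 : ℝ) < m := by exact_mod_cast hm
  have hgR : (0 : ℝ) < g := by exact_mod_cast hgpos
  have eR : ((e.natAbs : ℕ) : ℝ) = s * g := by
    have : ((e.natAbs : ℕ) : ℤ) = s * g := by rw [hse]; exact Int.natCast_natAbs e
    have h2 := congrArg (Int.cast : ℤ → ℝ) this
    rw [Int.cast_natCast] at h2
    rw [h2]; push_cast; rfl
  have gR : ((Nat.gcd d.natAbs e.natAbs : ℕ) : ℝ) = g := by
    exact_mod_cast hgg
  rw [gR, eR]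
  have : (p : ℝ) * (1 / (m : ℝ) ^ 2 + 2 / m * (g / (s * g))) =
      (p * s + 2 * p * m) / (s * (m : ℝ) ^ 2) := by
    field_simp
  rw [this, le_div_iff₀ (by positivity)]
  linarith

theorem stmt_13 : ∃ C : ℝ, ∀ (U k p m x a b : ℕ) (X : Finset ℕ),
    2 ≤ U → X ⊆ Finset.range U → X.card = k → 1 ≤ k →
    p.Prime → 4 * U ^ 2 < p → 1 ≤ m → m ≤ U →
    x < U → x ∉ X → a < m → b < m →
    (((((Finset.range p ×ˢ Finset.range p) ×ˢ (X ×ˢ X)).filter fun w =>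
          ((w.1.1 * w.2.1 + w.1.2) % p) % m = b ∧
          ((w.1.1 * w.2.2 + w.1.2) % p) % m = b ∧
          ((w.1.1 * x + w.1.2) % p) % m = a).card : ℝ)
        / ((((Finset.range p ×ˢ Finset.range p).filter fun στ =>
              ((στ.1 * x + στ.2) % p) % m = a).card : ℝ) * (k : ℝ) ^ 2))
      ≤ 1 / (m : ℝ) ^ 2 + C * U * Real.logb 2 U / ((m : ℝ) * (k : ℝ) ^ 2) := by
  refine ⟨32, ?_⟩
  intro U k p m x a b X hU hX hk hk1 hp hpU hm hmU hx hxX ha hb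
  have hUp : U < p := by nlinarith
  have hp0 := hp.pos
  set Q := (Finset.range p).filter (fun q => q % m = a) with hQ
  set D := (Finset.range p ×ˢ Finset.range p).filter fun στ : ℕ × ℕ =>
              ((στ.1 * x + στ.2) % p) % m = a with hD
  set N := ((Finset.range p ×ˢ Finset.range p) ×ˢ (X ×ˢ X)).filter fun w : (ℕ × ℕ) × (ℕ × ℕ) =>
          ((w.1.1 * w.2.1 + w.1.2) % p) % m = b ∧
          ((w.1.1 * w.2.2 + w.1.2) % p) % m = b ∧
          ((w.1.1 * x + w.1.2) % p) % m = a with hN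
  have hDc : Q.card * p ≤ D.card := by
    have hcp : Q.card * p = (Q ×ˢ Finset.range p).card := by
      rw [Finset.card_product, Finset.card_range]
    rw [hcp]
    apply Finset.card_le_card_of_injOn (fun w => (w.2, (w.1 + w.2 * (p - x)) % p))
    · rintro ⟨q, σ⟩ h
      simp only [hQ, Finset.coe_product, Set.mem_prod, Finset.mem_coe, Finset.mem_filter,
        Finset.mem_range] at h
      simp only [hD, Finset.coe_filter, Finset.mem_product, Finset.mem_range, Set.mem_ofPred_eq]
      refine ⟨⟨h.2, Nat.mod_lt _ hp0⟩, ?_⟩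
      have : σ * x + (q + σ * (p - x)) = q + p * σ := by
        obtain ⟨c, hc⟩ : ∃ c, p = x + c := ⟨p - x, by omega⟩
        rw [hc]; simp; ring
      rw [Nat.add_mod_mod, this, Nat.add_mul_mod_self_left, Nat.mod_eq_of_lt h.1.1, h.1.2]
    · rintro ⟨q, σ⟩ h ⟨q', σ'⟩ h' hh
      simp only [hQ, Finset.coe_product, Set.mem_prod, Finset.mem_coe, Finset.mem_filter,
        Finset.mem_range] at h h'
      simp only [Prod.mk.injEq] at hh
      obtain ⟨rfl, h2⟩ := hh
      have h3 : q ≡ q' [MOD p] := Nat.ModEq.add_right_cancel' _ h2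
      have := Nat.ModEq.eq_of_lt_of_lt h3 h.1.1 h'.1.1
      rw [this]
  have hQpos : 0 < Q.card := Finset.card_pos.mpr ⟨a, by
    rw [hQ, Finset.mem_filter, Finset.mem_range]
    exact ⟨by omega, Nat.mod_eq_of_lt ha⟩⟩
  set G : ℕ → ℕ → ℝ := fun d e => (Nat.gcd d e : ℝ) / (max d e : ℕ) with hG
  have hGn : ∀ d e, 0 ≤ G d e := fun d e => by positivity
  -- bound per pair and q
  have hpair : ∀ y ∈ X, ∀ z ∈ X, ∀ q, (((Finset.range p ×ˢ Finset.range p).filter fun w =>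
      ((w.1 * y + w.2) % p) % m = b ∧ ((w.1 * z + w.2) % p) % m = b ∧
        (w.1 * x + w.2) % p = q).card : ℝ) ≤
      p * (1 / (m : ℝ) ^ 2 + 2 / m * G ((y : ℤ) - x).natAbs ((z : ℤ) - x).natAbs) := by
    intro y hy z hz q
    have hyU := Finset.mem_range.mp (hX hy)
    have hzU := Finset.mem_range.mp (hX hz)
    have hyx : y ≠ x := fun h => hxX (h ▸ hy)
    have hzx : z ≠ x := fun h => hxX (h ▸ hz)
    rcases le_total ((y : ℤ) - x).natAbs ((z : ℤ) - x).natAbs with h | h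
    · have := lemPair U p m x y z b q hp hpU hm hmU hx hzU hzx h
      simp only [hG]
      rw [max_eq_right h]
      exact this
    · have := lemPair U p m x z y b q hp hpU hm hmU hx hyU hyx h
      simp only [hG]
      rw [max_eq_left h, Nat.gcd_comm]
      refine le_trans (le_of_eq ?_) this
      congr 2
      apply Finset.filter_congr
      intro w _
      tauto
  have hNc : (N.card : ℝ) ≤ ∑ y ∈ X, ∑ z ∈ X, ∑ q ∈ Q,
      (((Finset.range p ×ˢ Finset.range p).filter fun w =>
      ((w.1 * y + w.2) % p) % m = b ∧ ((w.1 * z + w.2) % p) % m = b ∧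
        (w.1 * x + w.2) % p = q).card : ℝ) := by
    norm_cast
    rw [← Finset.sum_product', ← Finset.sum_product', ← Finset.card_sigma]
    apply Finset.card_le_card_of_injOn
      (fun w => ⟨((w.2.1, w.2.2), (w.1.1 * x + w.1.2) % p), w.1⟩)
    · rintro ⟨⟨σ, τ⟩, y, z⟩ h
      simp only [hN, Finset.coe_filter, Finset.mem_product, Finset.mem_range, Set.mem_ofPred_eq] at h
      simp only [hQ, Finset.coe_sigma, Set.mem_sigma_iff, Finset.mem_coe, Finset.mem_product,
        Finset.mem_filter, Finset.mem_range]
      exact ⟨⟨h.1.2, Nat.mod_lt _ hp0, h.2.2.2⟩, h.1.1, h.2.1, h.2.2.1, trivial⟩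
    · rintro ⟨⟨σ, τ⟩, y, z⟩ h ⟨⟨σ', τ'⟩, y', z'⟩ h' hh
      simp only [Sigma.mk.injEq, Prod.mk.injEq, heq_eq_eq] at hh
      simp [hh]
  have hGsum : ∑ y ∈ X, ∑ z ∈ X, G ((y : ℤ) - x).natAbs ((z : ℤ) - x).natAbs ≤
      16 * U * Real.logb 2 U := by
    have h1 : ∑ y ∈ X, ∑ z ∈ X, G ((y : ℤ) - x).natAbs ((z : ℤ) - x).natAbs ≤
        ∑ y ∈ X, 2 * ∑ e ∈ Finset.Ioc 0 U, G ((y : ℤ) - x).natAbs e :=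
      Finset.sum_le_sum fun y _ => lemTwo U x X hX hx hxX (fun e => G ((y : ℤ) - x).natAbs e)
        (fun e => hGn _ _)
    have h2 := lemTwo U x X hX hx hxX (fun d => 2 * ∑ e ∈ Finset.Ioc 0 U, G d e)
      (fun d => mul_nonneg zero_le_two (Finset.sum_nonneg fun e _ => hGn _ _))
    have h3 : ∑ d ∈ Finset.Ioc 0 U, 2 * ∑ e ∈ Finset.Ioc 0 U, G d e ≤
        2 * (2 * (U * (1 + Real.log U))) := by
      rw [← Finset.mul_sum, Finset.sum_comm]
      exact mul_le_mul_of_nonneg_left (lemG U) zero_le_two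
    have hU1 : (2 : ℝ) ≤ U := by exact_mod_cast hU
    have hl2 : 0 < Real.log 2 := Real.log_pos one_lt_two
    have hl2' : Real.log 2 ≤ 1 := by have := Real.log_two_lt_d9; linarith
    have hlU : Real.log 2 ≤ Real.log U := Real.log_le_log two_pos hU1
    have h4 : 1 + Real.log U ≤ 2 * Real.logb 2 U := by
      rw [Real.logb]
      have a1 : 1 ≤ Real.log U / Real.log 2 := (one_le_div hl2).mpr hlU
      have a2 : Real.log U ≤ Real.log U / Real.log 2 := by
        rw [le_div_iff₀ hl2]
        exact mul_le_of_le_one_right (by linarith) hl2'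
      linarith
    have h5 := mul_le_mul_of_nonneg_left h4 (Nat.cast_nonneg (α := ℝ) U)
    linarith
  have hmR : (0 : ℝ) < m := by exact_mod_cast hm
  have hkR : (0 : ℝ) < k := by exact_mod_cast hk1
  have hpR : (0 : ℝ) < p := by exact_mod_cast hp0
  have hQR : (0 : ℝ) < Q.card := by exact_mod_cast hQpos
  have hDR : (Q.card : ℝ) * p ≤ D.card := by exact_mod_cast hDc
  have hNb : (N.card : ℝ) ≤ (Q.card * p) *
      ((k : ℝ) ^ 2 / (m : ℝ) ^ 2 + 2 / m * (16 * U * Real.logb 2 U)) := by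
    calc (N.card : ℝ) ≤ _ := hNc
      _ ≤ ∑ y ∈ X, ∑ z ∈ X, ∑ q ∈ Q,
        (p * (1 / (m : ℝ) ^ 2 + 2 / m * G ((y : ℤ) - x).natAbs ((z : ℤ) - x).natAbs)) :=
          Finset.sum_le_sum fun y hy => Finset.sum_le_sum fun z hz =>
            Finset.sum_le_sum fun q _ => hpair y hy z hz q
      _ = (Q.card * p) * ((k : ℝ) ^ 2 / (m : ℝ) ^ 2 +
          2 / m * ∑ y ∈ X, ∑ z ∈ X, G ((y : ℤ) - x).natAbs ((z : ℤ) - x).natAbs) := by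
          simp only [Finset.sum_const, nsmul_eq_mul, ← Finset.mul_sum, Finset.sum_add_distrib, hk]
          ring
      _ ≤ _ := by gcongr
  have hlog : 0 ≤ Real.logb 2 U := Real.logb_nonneg one_lt_two (by exact_mod_cast (by omega : 1 ≤ U))
  rw [div_le_iff₀ (mul_pos (lt_of_lt_of_le (mul_pos hQR hpR) hDR) (by positivity))]
  calc (N.card : ℝ) ≤ _ := hNb
    _ ≤ D.card * ((k : ℝ) ^ 2 / (m : ℝ) ^ 2 + 2 / m * (16 * U * Real.logb 2 U)) := by gcongr
    _ = _ := by field_simp; ring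
end
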